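/- arXiv:0904.2302 — 9 statements merged into one kernel-verified Lean document; each statement's English description precedes it below -/
import Mathlib

section
/- Let M ≥ 1 and define the Maximum Weight Matching normalized weight map μ̄ : ℝ₊^M \ {0} → ℝ₊^M by μ̄_i(q) = q_i / ‖q‖₁. Then μ̄ satisfies Condition 1: for every ε ∈ (0,1) and every C > 0 there exists B > 0 such that |(q_i + Δq_i)/‖q + Δq‖₁ − q_i/‖q‖₁| ≤ ε for every index i, every q ∈ ℝ₊^M with ‖q‖ > B, and every Δq ∈ ℝ^M with ‖Δq‖ < C and q + Δq ∈ ℝ₊^M \ {0}. -/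
open scoped BigOperators

/-!
Normalizing two vectors `x` and `y` of a normed space leaves them at distance at most
`2 * ‖x - y‖ / ‖y‖`, so a bounded displacement of `y` has little effect once `‖y‖` is large.
The map `q ↦ q / ‖q‖₁` is the normalization for the `ℓ¹` norm, and measuring `q` and `Δq` by the
equivalent Euclidean norm changes only the constants. Each coordinate of a vector is bounded by
its `ℓ¹` norm.
-/

open Bornology
open NormedSpace (norm_normalize norm_smul_normalize)

section Normalization

variable {E F : Type*} [NormedAddCommGroup E] [NormedSpace ℝ E]
  [NormedAddCommGroup F] [NormedSpace ℝ F]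

lemma norm_normalize_le_one (x : E) : ‖NormedSpace.normalize x‖ ≤ 1 := by
  rcases eq_or_ne x 0 with rfl | hx
  · simp
  · exact (norm_normalize hx).le

lemma norm_mul_norm_normalize_sub_normalize_le (x y : E) :
    ‖y‖ * ‖NormedSpace.normalize x - NormedSpace.normalize y‖ ≤ 2 * ‖x - y‖ := by
  have decomposition :
      ‖y‖ • (NormedSpace.normalize x - NormedSpace.normalize y) =
        (‖y‖ - ‖x‖) • NormedSpace.normalize x + (x - y) := by
    rw [smul_sub, sub_smul, norm_smul_normalize, norm_smul_normalize]
    abel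
  calc ‖y‖ * ‖NormedSpace.normalize x - NormedSpace.normalize y‖
      = ‖(‖y‖ - ‖x‖) • NormedSpace.normalize x + (x - y)‖ := by
        rw [← decomposition, norm_smul, norm_norm]
    _ ≤ |‖y‖ - ‖x‖| * ‖NormedSpace.normalize x‖ + ‖x - y‖ := by
        rw [← Real.norm_eq_abs, ← norm_smul]
        exact norm_add_le _ _
    _ ≤ ‖x - y‖ * 1 + ‖x - y‖ := by
        gcongr
        · exact (abs_norm_sub_norm_le y x).trans_eq (norm_sub_rev y x)
        · exact norm_normalize_le_one x
    _ = 2 * ‖x - y‖ := by ring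

lemma eventually_cobounded_norm_normalize_add_sub_normalize_le {ε : ℝ} (hε : 0 < ε) (C : ℝ) :
    ∀ᶠ x in cobounded E, ∀ d, ‖d‖ ≤ C →
      ‖NormedSpace.normalize (x + d) - NormedSpace.normalize x‖ ≤ ε := by
  filter_upwards [eventually_cobounded_le_norm (2 * C / ε), eventually_ne_cobounded 0]
    with x hx hx0 d hd
  refine le_of_mul_le_mul_left ?_ (norm_pos_iff.mpr hx0)
  calc ‖x‖ * ‖NormedSpace.normalize (x + d) - NormedSpace.normalize x‖
      ≤ 2 * ‖d‖ := by simpa using norm_mul_norm_normalize_sub_normalize_le (x + d) x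
    _ ≤ 2 * C := by gcongr
    _ ≤ ‖x‖ * ε := (div_le_iff₀ hε).mp hx

lemma eventually_cobounded_norm_normalize_map_add_sub_normalize_map_le {K : NNReal} {L : E →L[ℝ] F}
    (hL : AntilipschitzWith K L) {ε : ℝ} (hε : 0 < ε) (C : ℝ) :
    ∀ᶠ x in cobounded E, ∀ d, ‖d‖ ≤ C →
      ‖NormedSpace.normalize (L (x + d)) - NormedSpace.normalize (L x)‖ ≤ ε := by
  filter_upwards [hL.tendsto_cobounded.eventually
    (eventually_cobounded_norm_normalize_add_sub_normalize_le hε (‖L‖ * C))] with x hx d hd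
  rw [map_add]
  exact hx (L d) (L.le_opNorm_of_le hd)

end Normalization

section CoordinateSpace

variable {ι : Type*} [Fintype ι]

/-- The identity of `ℝ^ι`, from the Euclidean norm to the `ℓ¹` norm. It turns `q / ‖q‖₁` into
`NormedSpace.normalize` while displacements are still measured by the Euclidean norm. -/
noncomputable def euclideanEquivL1 : EuclideanSpace ℝ ι ≃L[ℝ] PiLp 1 fun _ : ι => ℝ :=
  (PiLp.continuousLinearEquiv 2 ℝ _).trans (PiLp.continuousLinearEquiv 1 ℝ _).symm

lemma normalize_euclideanEquivL1_apply (q : EuclideanSpace ℝ ι) (i : ι) :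
    NormedSpace.normalize (euclideanEquivL1 q) i = q i / ∑ j, |q j| := by
  simp [NormedSpace.normalize, euclideanEquivL1, PiLp.norm_eq_of_L1, div_eq_inv_mul]

theorem stmt_0_general {ε : ℝ} (hε : 0 < ε) (C : ℝ) :
    ∃ B > (0 : ℝ), ∀ i : ι, ∀ q : EuclideanSpace ℝ ι, B < ‖q‖ →
      ∀ Δq : EuclideanSpace ℝ ι, ‖Δq‖ ≤ C →
        |(q i + Δq i) / (∑ j, |q j + Δq j|) - q i / (∑ j, |q j|)| ≤ ε := by
  have hlarge := eventually_cobounded_norm_normalize_map_add_sub_normalize_map_le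
    (L := (euclideanEquivL1 (ι := ι)).toContinuousLinearMap)
    (euclideanEquivL1 (ι := ι)).antilipschitz hε C
  obtain ⟨B, hB, hnormalize⟩ :=
    (Filter.atTop_basis_Ioi' (0 : ℝ)).cobounded_of_norm.eventually_iff.mp hlarge
  refine ⟨B, hB, fun i q hq Δq hΔq => ?_⟩
  have hcoord := (PiLp.norm_apply_le _ i).trans (hnormalize hq Δq hΔq)
  simpa [-map_add, normalize_euclideanEquivL1_apply] using hcoord

end CoordinateSpace

/-- The MWM normalized weight map `μ̄ i q = q i / ‖q‖₁` on `ℝ₊^M \ {0}` satisfies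
Condition 1. -/
theorem stmt_0 (M : ℕ) (hM : 1 ≤ M) :
    ∀ ε ∈ Set.Ioo (0 : ℝ) 1, ∀ C > (0 : ℝ), ∃ B > (0 : ℝ),
      ∀ i : Fin M, ∀ q : EuclideanSpace ℝ (Fin M),
        (∀ j, 0 ≤ q j) → ‖q‖ > B →
        ∀ Δq : EuclideanSpace ℝ (Fin M), ‖Δq‖ < C →
          (∀ j, 0 ≤ q j + Δq j) → q + Δq ≠ 0 →
          |(q i + Δq i) / (∑ j, |q j + Δq j|) - q i / (∑ j, |q j|)| ≤ ε := by
  intro ε hε C _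
  obtain ⟨B, hB, hbound⟩ := stmt_0_general (ι := Fin M) hε.1 C
  exact ⟨B, hB, fun i q _ hq Δq hΔq _ _ => hbound i q hq Δq hΔq.le⟩
end

section
/- Let M ≥ 1 and fix constants γ_k > 0 and α_k > 0 for k = 1,…,M, β > 0, and η ∈ (0,1). For q ∈ ℝ₊^M define w_k(q) = γ_k · exp( α_k q_k / ( β + ((1/M) Σ_{j=1}^M α_j q_j)^η ) ) and the normalized exponential-rule weights μ̄_i(q) = w_i(q) / Σ_{k=1}^M w_k(q). Then μ̄ satisfies Condition 1: for every ε ∈ (0,1) and every C > 0 there exists B > 0 such that |μ̄_i(q+Δq) − μ̄_i(q)| ≤ ε for every index i, every q ∈ ℝ₊^M with ‖q‖ > B, and every Δq ∈ ℝ^M with ‖Δq‖ < C and q + Δq ∈ ℝ₊^M. -/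
open scoped BigOperators

/-!
Write the exponents as `a_k * h S`, where `a_k = α_k q_k`, `S` is the mean of the `a_j`, and
`h s = (β + s ^ η)⁻¹`, and let primes denote the values at a displaced point. In
`a' * h S' - a * h S = a' * (h S' - h S) + (a' - a) * h S` the last term is small because `a' - a`
is bounded and `h S → 0`. The other one is small because `a' = O(S')` and
`S' * (h S' - h S) = (S' * h S' - S * h S) - (S' - S) * h S`, where `S' * h S' - S * h S → 0` by the
mean value inequality, the derivative of `s * h s` tending to `0`. Hence bounded displacements
change the exponents less and less, and the normalized weights are a softmax of shifted exponents,
which is uniformly continuous.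
-/

open Filter Asymptotics Bornology Topology Uniformity

section VanishingVariation

variable {X F : Type*} [PseudoMetricSpace X] {l : Filter X} {C : ℝ}

/-- The filter of pairs of points that tend to infinity along `l` while staying at distance at most
`C` from each other. -/
def closePairs (l : Filter X) (C : ℝ) : Filter (X × X) :=
  l ×ˢ l ⊓ 𝓟 {p | dist p.1 p.2 ≤ C}

/-- A map has vanishing variation along `l` if its values at two points tending to infinity along
`l` at bounded distance from each other become arbitrarily close. Along `cobounded X` this is the
oscillation condition on Higson functions in coarse geometry; along the trace of `cobounded X` on
the nonnegative orthant it is Condition 1. -/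
def HasVanishingVariation [UniformSpace F] (f : X → F) (l : Filter X) : Prop :=
  ∀ C, Tendsto (Prod.map f f) (closePairs l C) (𝓤 F)

lemma tendsto_fst_closePairs : Tendsto Prod.fst (closePairs l C) l :=
  tendsto_fst.mono_left inf_le_left

lemma tendsto_snd_closePairs : Tendsto Prod.snd (closePairs l C) l :=
  tendsto_snd.mono_left inf_le_left

lemma eventually_dist_le_closePairs (l : Filter X) (C : ℝ) :
    ∀ᶠ p in closePairs l C, dist p.1 p.2 ≤ C :=
  mem_inf_of_right (mem_principal_self _)

lemma eventually_dist_le_closePairs_of_lipschitzWith {Y : Type*} [PseudoMetricSpace Y]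
    {K : NNReal} {u : X → Y} (hu : LipschitzWith K u) (l : Filter X) (C : ℝ) :
    ∀ᶠ p in closePairs l C, dist (u p.1) (u p.2) ≤ K * C := by
  filter_upwards [eventually_dist_le_closePairs l C] with p hp
  exact (hu.dist_le_mul _ _).trans (by gcongr)

lemma isBigO_sub_closePairs_of_lipschitzWith [SeminormedAddCommGroup F] {K : NNReal} {u : X → F}
    (hu : LipschitzWith K u) (l : Filter X) (C : ℝ) :
    (fun p : X × X ↦ u p.1 - u p.2) =O[closePairs l C] (fun _ ↦ (1 : ℝ)) :=
  IsBigO.of_bound (K * C) <| by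
    simpa only [← dist_eq_norm, norm_one, mul_one] using
      eventually_dist_le_closePairs_of_lipschitzWith hu l C

lemma tendsto_closePairs_of_lipschitzWith {Y : Type*} [PseudoMetricSpace Y] {m : Filter Y}
    {K : NNReal} {u : X → Y} (hu : LipschitzWith K u) (hlm : Tendsto u l m) (C : ℝ) :
    Tendsto (Prod.map u u) (closePairs l C) (closePairs m (K * C)) :=
  tendsto_inf.2 ⟨(hlm.prodMap hlm).mono_left inf_le_left,
    tendsto_principal.2 (eventually_dist_le_closePairs_of_lipschitzWith hu l C)⟩

lemma hasVanishingVariation_iff_isLittleO [SeminormedAddCommGroup F] {f : X → F} :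
    HasVanishingVariation f l ↔
      ∀ C, (fun p : X × X ↦ f p.1 - f p.2) =o[closePairs l C] (fun _ ↦ (1 : ℝ)) := by
  simp only [HasVanishingVariation, tendsto_uniformity_iff_dist_tendsto_zero, dist_eq_norm,
    isLittleO_one_iff, Prod.map_fst, Prod.map_snd,
    tendsto_zero_iff_norm_tendsto_zero (f := fun p : X × X ↦ f p.1 - f p.2)]

lemma hasVanishingVariation_pi {ι : Type*} {G : ι → Type*} [∀ i, UniformSpace (G i)]
    {f : X → ∀ i, G i} :
    HasVanishingVariation f l ↔ ∀ i, HasVanishingVariation (fun x ↦ f x i) l := by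
  simp only [HasVanishingVariation, Pi.uniformity, tendsto_iInf, tendsto_comap_iff]
  exact forall_comm

namespace HasVanishingVariation

lemma uniformContinuous_comp {G : Type*} [UniformSpace F] [UniformSpace G] {g : F → G} {f : X → F}
    (hf : HasVanishingVariation f l) (hg : UniformContinuous g) :
    HasVanishingVariation (fun x ↦ g (f x)) l :=
  fun C ↦ Tendsto.comp hg (hf C)

lemma comp_lipschitzWith {Y : Type*} [PseudoMetricSpace Y] [UniformSpace F] {m : Filter Y}
    {f : Y → F} {K : NNReal} {u : X → Y} (hf : HasVanishingVariation f m) (hu : LipschitzWith K u)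
    (hlm : Tendsto u l m) : HasVanishingVariation (fun x ↦ f (u x)) l :=
  fun C ↦ (hf (K * C)).comp (tendsto_closePairs_of_lipschitzWith hu hlm C)

lemma of_tendsto_deriv_zero [NormedAddCommGroup F] [NormedSpace ℝ F] {f f' : ℝ → F}
    (hf : ∀ᶠ s in atTop, HasDerivAt f (f' s) s) (hf' : Tendsto f' atTop (𝓝 0)) :
    HasVanishingVariation f atTop := by
  refine hasVanishingVariation_iff_isLittleO.2 fun C ↦ ?_
  suffices h : (fun p : ℝ × ℝ ↦ f p.1 - f p.2) =o[closePairs atTop C] (fun p ↦ p.1 - p.2) from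
    h.trans_isBigO (isBigO_sub_closePairs_of_lipschitzWith LipschitzWith.id atTop C)
  refine isLittleO_iff.2 fun c hc ↦ ?_
  obtain ⟨N, hN⟩ := eventually_atTop.1
    (hf.and (hf'.norm.eventually_le_const (norm_zero.trans_lt hc)))
  filter_upwards [tendsto_fst_closePairs (eventually_ge_atTop N),
    tendsto_snd_closePairs (eventually_ge_atTop N)] with p hp₁ hp₂
  exact (convex_Ici N).norm_image_sub_le_of_norm_hasDerivWithin_le
    (fun s hs ↦ (hN s hs).1.hasDerivWithinAt) (fun s hs ↦ (hN s hs).2) hp₂ hp₁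

lemma mul_comp {h : ℝ → ℝ} {a u : X → ℝ} {K K' : NNReal}
    (hvar : HasVanishingVariation (fun s ↦ s * h s) atTop) (hh : Tendsto h atTop (𝓝 0))
    (ha : LipschitzWith K a) (hu : LipschitzWith K' u) (hlim : Tendsto u l atTop)
    (hau : a =O[l] u) : HasVanishingVariation (fun x ↦ a x * h (u x)) l := by
  refine hasVanishingVariation_iff_isLittleO.2 fun C ↦ ?_
  have hh₂ : (fun p : X × X ↦ h (u p.2)) =o[closePairs l C] (fun _ ↦ (1 : ℝ)) :=
    (isLittleO_one_iff ℝ).2 (hh.comp (hlim.comp tendsto_snd_closePairs))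
  have bounded_mul {b : X → ℝ} {L : NNReal} (hb : LipschitzWith L b) :
      (fun p : X × X ↦ (b p.1 - b p.2) * h (u p.2)) =o[closePairs l C] (fun _ ↦ (1 : ℝ)) := by
    simpa only [mul_one] using (isBigO_sub_closePairs_of_lipschitzWith hb l C).mul_isLittleO hh₂
  have hu_mul : (fun p : X × X ↦ u p.1 * (h (u p.1) - h (u p.2))) =o[closePairs l C]
      (fun _ ↦ (1 : ℝ)) :=
    ((hasVanishingVariation_iff_isLittleO.1 (hvar.comp_lipschitzWith hu hlim) C).sub
      (bounded_mul hu)).congr_left fun p ↦ by ring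
  have ha_mul : (fun p : X × X ↦ a p.1 * (h (u p.1) - h (u p.2))) =o[closePairs l C]
      (fun _ ↦ (1 : ℝ)) :=
    ((hau.comp_tendsto tendsto_fst_closePairs).mul (isBigO_refl _ _)).trans_isLittleO hu_mul
  exact (ha_mul.add (bounded_mul ha)).congr_left fun p ↦ by ring

lemma exists_forall_dist_add_le {E : Type*} [SeminormedAddCommGroup E] [PseudoMetricSpace F]
    {f : E → F} {s : Set E} (hf : HasVanishingVariation f (cobounded E ⊓ 𝓟 s)) {ε : ℝ}
    (hε : 0 < ε) (C : ℝ) :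
    ∃ B > 0, ∀ x ∈ s, B < ‖x‖ → ∀ y, ‖y‖ < C → x + y ∈ s → dist (f (x + y)) (f x) ≤ ε := by
  have hbasis := (hasBasis_cobounded_norm (E := E)).inf_principal s
  obtain ⟨R, -, hR⟩ := ((hbasis.prod_self.inf_principal _).tendsto_iff
    Metric.uniformity_basis_dist_le).1 (hf C) ε hε
  refine ⟨max 1 (R + C), by positivity, fun x hx hxB y hy hxy ↦ ?_⟩
  have hRx : R + C < ‖x‖ := (le_max_right _ _).trans_lt hxB
  have hRxy : R ≤ ‖x + y‖ := by linarith [norm_le_add_norm_add x y]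
  have hRx' : R ≤ ‖x‖ := by linarith [norm_nonneg y]
  exact hR (x + y, x) ⟨⟨⟨hRxy, hxy⟩, ⟨hRx', hx⟩⟩, by simpa using hy.le⟩

end HasVanishingVariation

end VanishingVariation

section Exponent

variable {β η : ℝ}

lemma tendsto_inv_const_add_rpow_atTop (β : ℝ) (hη : 0 < η) :
    Tendsto (fun s : ℝ ↦ (β + s ^ η)⁻¹) atTop (𝓝 0) :=
  (tendsto_atTop_add_const_left _ β (tendsto_rpow_atTop hη)).inv_tendsto_atTop

lemma hasDerivAt_mul_inv_const_add_rpow {s : ℝ} (hs : 0 < s) (hD : β + s ^ η ≠ 0) :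
    HasDerivAt (fun s ↦ s * (β + s ^ η)⁻¹)
      ((1 - η) * (β + s ^ η)⁻¹ + η * β * (β + s ^ η)⁻¹ ^ 2) s := by
  have hpow : s * s ^ (η - 1) = s ^ η := by
    rw [Real.rpow_sub_one hs.ne', mul_div_cancel₀ _ hs.ne']
  refine ((hasDerivAt_id' s).fun_mul
    (((Real.hasDerivAt_rpow_const (p := η) (Or.inl hs.ne')).const_add β).fun_inv hD)).congr_deriv ?_
  field_simp
  linear_combination (-η) * hpow

lemma hasVanishingVariation_mul_inv_const_add_rpow (β : ℝ) (hη : 0 < η) :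
    HasVanishingVariation (fun s : ℝ ↦ s * (β + s ^ η)⁻¹) atTop := by
  have hinv := tendsto_inv_const_add_rpow_atTop β hη
  refine .of_tendsto_deriv_zero
    (f' := fun s ↦ (1 - η) * (β + s ^ η)⁻¹ + η * β * (β + s ^ η)⁻¹ ^ 2) ?_ ?_
  · filter_upwards [eventually_gt_atTop 0, (tendsto_atTop_add_const_left _ β
      (tendsto_rpow_atTop hη)).eventually_ne_atTop 0] with s hs hD
    exact hasDerivAt_mul_inv_const_add_rpow hs hD
  · simpa using (hinv.const_mul (1 - η)).add ((hinv.pow 2).const_mul (η * β))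

lemma hasVanishingVariation_div_const_add_rpow {X : Type*} [PseudoMetricSpace X] {l : Filter X}
    {a u : X → ℝ} {K K' : NNReal} (β : ℝ) (hη : 0 < η) (ha : LipschitzWith K a)
    (hu : LipschitzWith K' u) (hlim : Tendsto u l atTop) (hau : a =O[l] u) :
    HasVanishingVariation (fun x ↦ a x / (β + u x ^ η)) l := by
  simpa only [div_eq_mul_inv] using (hasVanishingVariation_mul_inv_const_add_rpow β hη).mul_comp
    (tendsto_inv_const_add_rpow_atTop β hη) ha hu hlim hau

end Exponent

section Softmax

variable {ι : Type*} [Fintype ι]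

/-- The softmax map: exponential weights, normalized to have sum `1`. -/
noncomputable def softmax (x : ι → ℝ) (i : ι) : ℝ :=
  Real.exp (x i) / ∑ k, Real.exp (x k)

lemma softmax_add_log {γ : ι → ℝ} (hγ : ∀ k, 0 < γ k) (x : ι → ℝ) :
    softmax (x + fun k ↦ Real.log (γ k)) =
      fun i ↦ γ i * Real.exp (x i) / ∑ k, γ k * Real.exp (x k) := by
  ext i
  simp only [softmax, Pi.add_apply, Real.exp_add, Real.exp_log (hγ _), mul_comm]

lemma sum_exp_pos (x : ι → ℝ) (i : ι) : 0 < ∑ k, Real.exp (x k) :=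
  Finset.sum_pos (fun k _ ↦ Real.exp_pos (x k)) ⟨i, Finset.mem_univ i⟩

lemma softmax_le_one (x : ι → ℝ) (i : ι) : softmax x i ≤ 1 :=
  (div_le_one (sum_exp_pos x i)).2
    (Finset.single_le_sum (fun k _ ↦ (Real.exp_pos (x k)).le) (Finset.mem_univ i))

lemma exp_apply_le_exp_dist_mul (x y : ι → ℝ) (k : ι) :
    Real.exp (x k) ≤ Real.exp (dist x y) * Real.exp (y k) := by
  rw [← Real.exp_add]
  gcongr
  linarith [(le_abs_self _).trans ((Real.dist_eq _ _).symm.trans_le (dist_le_pi_dist x y k))]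

lemma softmax_le_exp_mul_softmax (x y : ι → ℝ) (i : ι) :
    softmax x i ≤ Real.exp (2 * dist x y) * softmax y i := by
  have hsum : ∑ k, Real.exp (y k) ≤ Real.exp (dist x y) * ∑ k, Real.exp (x k) := by
    rw [Finset.mul_sum, dist_comm]
    exact Finset.sum_le_sum fun k _ ↦ exp_apply_le_exp_dist_mul y x k
  rw [softmax, softmax, ← mul_div_assoc, div_le_div_iff₀ (sum_exp_pos x i) (sum_exp_pos y i)]
  calc Real.exp (x i) * ∑ k, Real.exp (y k)
      ≤ (Real.exp (dist x y) * Real.exp (y i)) * (Real.exp (dist x y) * ∑ k, Real.exp (x k)) :=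
        mul_le_mul (exp_apply_le_exp_dist_mul x y i) hsum (sum_exp_pos y i).le (by positivity)
    _ = Real.exp (2 * dist x y) * Real.exp (y i) * ∑ k, Real.exp (x k) := by
        rw [two_mul, Real.exp_add]
        ring

lemma softmax_sub_softmax_le (x y : ι → ℝ) (i : ι) :
    softmax x i - softmax y i ≤ Real.exp (2 * dist x y) - 1 := by
  have one_le_exp : 1 ≤ Real.exp (2 * dist x y) := Real.one_le_exp (by positivity)
  calc softmax x i - softmax y i
      ≤ (Real.exp (2 * dist x y) - 1) * softmax y i := by
        linarith [softmax_le_exp_mul_softmax x y i]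
    _ ≤ Real.exp (2 * dist x y) - 1 :=
        mul_le_of_le_one_right (sub_nonneg.2 one_le_exp) (softmax_le_one y i)

lemma dist_softmax_le (x y : ι → ℝ) :
    dist (softmax x) (softmax y) ≤ Real.exp (2 * dist x y) - 1 := by
  have one_le_exp : 1 ≤ Real.exp (2 * dist x y) := Real.one_le_exp (by positivity)
  exact (dist_pi_le_iff (sub_nonneg.2 one_le_exp)).2 fun i ↦ abs_sub_le_iff.2
    ⟨softmax_sub_softmax_le x y i, dist_comm y x ▸ softmax_sub_softmax_le y x i⟩

lemma uniformContinuous_softmax : UniformContinuous (softmax : (ι → ℝ) → ι → ℝ) := by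
  have hdist : Tendsto (fun p : (ι → ℝ) × (ι → ℝ) ↦ dist p.1 p.2) (𝓤 (ι → ℝ)) (𝓝 0) :=
    tendsto_uniformity_iff_dist_tendsto_zero.1 tendsto_id
  have hbound : Tendsto (fun p : (ι → ℝ) × (ι → ℝ) ↦ Real.exp (2 * dist p.1 p.2) - 1)
      (𝓤 (ι → ℝ)) (𝓝 0) := by
    simpa using ((Real.continuous_exp.tendsto _).comp (hdist.const_mul 2)).sub_const 1
  exact tendsto_uniformity_iff_dist_tendsto_zero.2
    (squeeze_zero (fun _ ↦ dist_nonneg) (fun p ↦ dist_softmax_le p.1 p.2) hbound)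

end Softmax

section Orthant

variable {ι : Type*} [Fintype ι] {γ α : ι → ℝ} {c η : ℝ}

/-- The filter of neighborhoods of infinity in the nonnegative orthant. -/
def orthantAtInfty (ι : Type*) [Fintype ι] : Filter (EuclideanSpace ℝ ι) :=
  cobounded (EuclideanSpace ℝ ι) ⊓ 𝓟 {q | ∀ j, 0 ≤ q j}

lemma eventually_nonneg_orthantAtInfty : ∀ᶠ q in orthantAtInfty ι, ∀ j, 0 ≤ q j :=
  mem_inf_of_right (mem_principal_self _)

lemma norm_le_sum_inv_mul_sum_mul (hα : ∀ k, 0 < α k) {q : EuclideanSpace ℝ ι}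
    (hq : ∀ j, 0 ≤ q j) : ‖q‖ ≤ (∑ j, (α j)⁻¹) * ∑ j, α j * q j := by
  have hsum : ‖q‖ ≤ ∑ j, q j := by
    rw [EuclideanSpace.norm_eq]
    refine Real.sqrt_le_iff.2 ⟨Finset.sum_nonneg fun j _ ↦ hq j, ?_⟩
    simp only [Real.norm_eq_abs, sq_abs]
    exact Finset.sum_sq_le_sq_sum_of_nonneg fun j _ ↦ hq j
  calc ‖q‖ ≤ ∑ j, (α j)⁻¹ * (α j * q j) := by
        simpa only [inv_mul_cancel_left₀ (hα _).ne'] using hsum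
    _ ≤ (∑ j, (α j)⁻¹) * ∑ j, α j * q j := by
        rw [Finset.sum_mul]
        gcongr with j
        · exact (inv_pos.2 (hα j)).le
        · exact Finset.single_le_sum (f := fun j ↦ α j * q j)
            (fun j _ ↦ mul_nonneg (hα j).le (hq j)) (Finset.mem_univ j)

lemma tendsto_mul_sum_mul_orthantAtInfty (hα : ∀ k, 0 < α k) (hc : 0 < c) :
    Tendsto (fun q ↦ c * ∑ j, α j * q j) (orthantAtInfty ι) atTop := by
  cases isEmpty_or_nonempty ι
  · simp [orthantAtInfty, cobounded_eq_bot]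
  have hK : 0 < ∑ j, (α j)⁻¹ :=
    Finset.sum_pos (fun j _ ↦ inv_pos.2 (hα j)) Finset.univ_nonempty
  refine (Tendsto.atTop_of_const_mul₀ hK (tendsto_atTop_mono' _ ?_
    (tendsto_norm_cobounded_atTop.mono_left inf_le_left))).const_mul_atTop hc
  filter_upwards [eventually_nonneg_orthantAtInfty] with q hq
  exact norm_le_sum_inv_mul_sum_mul hα hq

lemma isBigO_mul_apply_orthantAtInfty (hα : ∀ k, 0 ≤ α k) (hc : 0 < c) (k : ι) :
    (fun q ↦ α k * q k) =O[orthantAtInfty ι] (fun q ↦ c * ∑ j, α j * q j) := by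
  refine IsBigO.of_bound c⁻¹ ?_
  filter_upwards [eventually_nonneg_orthantAtInfty] with q hq
  have hnonneg : ∀ j ∈ Finset.univ, 0 ≤ α j * q j := fun j _ ↦ mul_nonneg (hα j) (hq j)
  rw [Real.norm_of_nonneg (hnonneg k (Finset.mem_univ k)),
    Real.norm_of_nonneg (mul_nonneg hc.le (Finset.sum_nonneg hnonneg)), inv_mul_cancel_left₀ hc.ne']
  exact Finset.single_le_sum hnonneg (Finset.mem_univ k)

lemma exists_lipschitzWith_mul_sum_mul (α : ι → ℝ) (c : ℝ) :
    ∃ K, LipschitzWith K fun q : EuclideanSpace ℝ ι ↦ c * ∑ j, α j * q j := by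
  let L : EuclideanSpace ℝ ι →L[ℝ] ℝ := c • ∑ j, α j • EuclideanSpace.proj j
  have hL : (fun q : EuclideanSpace ℝ ι ↦ c * ∑ j, α j * q j) = L := by
    ext q
    simp [L]
  exact ⟨‖L‖₊, hL ▸ L.lipschitz⟩

lemma lipschitzWith_mul_apply (a : ℝ) (i : ι) :
    LipschitzWith ‖a‖₊ fun q : EuclideanSpace ℝ ι ↦ a * q i := by
  refine LipschitzWith.of_dist_le_mul fun p q ↦ ?_
  rw [Real.dist_eq, ← mul_sub, abs_mul, coe_nnnorm, Real.norm_eq_abs, dist_eq_norm]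
  gcongr
  exact PiLp.norm_apply_le (p - q) i

lemma hasVanishingVariation_expRule_exponent (hα : ∀ k, 0 < α k) (β : ℝ) (hc : 0 < c)
    (hη : 0 < η) :
    HasVanishingVariation
      (fun (q : EuclideanSpace ℝ ι) i ↦ α i * q i / (β + (c * ∑ j, α j * q j) ^ η))
      (orthantAtInfty ι) := by
  obtain ⟨K, hK⟩ := exists_lipschitzWith_mul_sum_mul α c
  exact hasVanishingVariation_pi.2 fun i ↦
    hasVanishingVariation_div_const_add_rpow β hη (lipschitzWith_mul_apply (α i) i)
      hK (tendsto_mul_sum_mul_orthantAtInfty hα hc)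
      (isBigO_mul_apply_orthantAtInfty (fun k ↦ (hα k).le) hc i)

lemma hasVanishingVariation_expRule (hγ : ∀ k, 0 < γ k) (hα : ∀ k, 0 < α k) (β : ℝ) (hc : 0 < c)
    (hη : 0 < η) :
    HasVanishingVariation
      (fun (q : EuclideanSpace ℝ ι) i ↦
        γ i * Real.exp (α i * q i / (β + (c * ∑ j, α j * q j) ^ η)) /
          ∑ k, γ k * Real.exp (α k * q k / (β + (c * ∑ j, α j * q j) ^ η)))
      (orthantAtInfty ι) := by
  have hadd_log : UniformContinuous fun x : ι → ℝ ↦ x + fun k ↦ Real.log (γ k) :=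
    uniformContinuous_id.add uniformContinuous_const
  have hsoftmax := ((hasVanishingVariation_expRule_exponent hα β hc hη).uniformContinuous_comp
    hadd_log).uniformContinuous_comp uniformContinuous_softmax
  simpa only [softmax_add_log hγ] using hsoftmax

end Orthant

theorem stmt_2_general {ι : Type*} [Fintype ι] (γ α : ι → ℝ)
    (hγ : ∀ k, 0 < γ k) (hα : ∀ k, 0 < α k) (β : ℝ) {c η : ℝ} (hc : 0 < c) (hη : 0 < η)
    (w : EuclideanSpace ℝ ι → ι → ℝ)
    (hw : ∀ q k, w q k = γ k * Real.exp (α k * q k / (β + (c * ∑ j, α j * q j) ^ η)))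
    (μ : EuclideanSpace ℝ ι → ι → ℝ) (hμ : ∀ q i, μ q i = w q i / ∑ k, w q k) :
    ∀ ε > (0 : ℝ), ∀ C : ℝ, ∃ B > (0 : ℝ), ∀ i : ι, ∀ q : EuclideanSpace ℝ ι,
      (∀ j, 0 ≤ q j) → ‖q‖ > B →
      ∀ Δq : EuclideanSpace ℝ ι, ‖Δq‖ < C → (∀ j, 0 ≤ q j + Δq j) →
        |μ (q + Δq) i - μ q i| ≤ ε := by
  intro ε hε C
  obtain rfl : w = _ := funext₂ hw
  obtain rfl : μ = _ := funext₂ hμ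
  obtain ⟨B, hB, hvar⟩ := (hasVanishingVariation_expRule hγ hα β hc hη).exists_forall_dist_add_le
    hε C
  exact ⟨B, hB, fun i q hq hqB Δq hΔq hqΔq ↦
    (dist_le_pi_dist _ _ i).trans (hvar q hq hqB Δq hΔq hqΔq)⟩

/-- The normalized exponential-rule weight map satisfies Condition 1. -/
theorem stmt_2 (M : ℕ) (hM : 1 ≤ M) (γ α : Fin M → ℝ)
    (hγ : ∀ k, 0 < γ k) (hα : ∀ k, 0 < α k) (β : ℝ) (hβ : 0 < β)
    (η : ℝ) (hη : η ∈ Set.Ioo (0 : ℝ) 1)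
    (w : EuclideanSpace ℝ (Fin M) → Fin M → ℝ)
    (hw : ∀ q k, w q k =
      γ k * Real.exp (α k * q k / (β + ((1 / (M : ℝ)) * ∑ j, α j * q j) ^ η)))
    (μ : EuclideanSpace ℝ (Fin M) → Fin M → ℝ)
    (hμ : ∀ q i, μ q i = w q i / ∑ k, w q k) :
    ∀ ε ∈ Set.Ioo (0 : ℝ) 1, ∀ C > (0 : ℝ), ∃ B > (0 : ℝ),
      ∀ i : Fin M, ∀ q : EuclideanSpace ℝ (Fin M),
        (∀ j, 0 ≤ q j) → ‖q‖ > B →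
        ∀ Δq : EuclideanSpace ℝ (Fin M), ‖Δq‖ < C → (∀ j, 0 ≤ q j + Δq j) →
          |μ (q + Δq) i - μ q i| ≤ ε :=
  fun ε hε C _ ↦ stmt_2_general γ α hγ hα β (one_div_pos.2 (Nat.cast_pos.2 hM)) hη.1
    w hw μ hμ ε hε.1 C
end

section
/- Let M ≥ 1 and fix constants γ_k > 0 and α_k > 0 for k = 1,…,M, β > 0, and η ∈ (0,1). For q ∈ ℝ₊^M define w_k(q) = γ_k · exp( α_k q_k / ( β + ((1/M) Σ_{j=1}^M α_j q_j)^η ) ) and the normalized exponential-rule weights μ̄_i(q) = w_i(q) / Σ_{k=1}^M w_k(q). Then μ̄ satisfies Condition 2: for every ε ∈ (0,1) and every C > 0 there exists B > 0 such that μ̄_i(q) ≤ ε for every index i and every q ∈ ℝ₊^M with ‖q‖ > B and q_i < C. -/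
open scoped BigOperators

/-!
Let `S` be the mean of the `α j * q j`. Since some `α k * q k` is at least `S`, the total weight is
at least `c * exp (S / g S)`, where `c > 0` is a lower bound of the `γ k` and `g S = β + S ^ η`.
If `q i ≤ C`, the `i`-th normalized weight is therefore at most
`γ i / c * exp ((α i * C - S) / g S)`. On the nonnegative orthant `S → ∞` as `‖q‖ → ∞`, and the
exponent then tends to `-∞` because `S / g S → ∞`, which is where `η < 1` enters.
-/

open Filter Topology Bornology

section Asymptotics

lemma tendsto_self_div_add_rpow_atTop {β η : ℝ} (hβ : 0 ≤ β) (hη : η < 1) :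
    Tendsto (fun S : ℝ => S / (β + S ^ η)) atTop atTop := by
  have hlim : Tendsto (fun S : ℝ => β / S + S ^ (-(1 - η))) atTop (𝓝 0) := by
    simpa only [add_zero, id_eq] using (tendsto_id.const_div_atTop β).add
      (tendsto_rpow_neg_atTop (sub_pos.2 hη))
  have hpos : ∀ᶠ S : ℝ in atTop, 0 < β / S + S ^ (-(1 - η)) := by
    filter_upwards [eventually_gt_atTop 0] with S hS
    positivity
  refine (tendsto_nhdsWithin_iff.2 ⟨hlim, hpos⟩).inv_tendsto_nhdsGT_zero.congr' ?_
  filter_upwards [eventually_gt_atTop 0] with S hS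
  rw [Pi.inv_apply, neg_sub, Real.rpow_sub_one hS.ne', ← add_div, inv_div]

lemma eventually_pos_of_tendsto_self_div_atTop {g : ℝ → ℝ}
    (hg : Tendsto (fun S => S / g S) atTop atTop) : ∀ᶠ S in atTop, 0 < g S := by
  filter_upwards [hg.eventually_gt_atTop 0, eventually_gt_atTop 0] with S hdiv hS
  exact (div_pos_iff_of_pos_left hS).1 hdiv

lemma tendsto_const_sub_div_atBot {g : ℝ → ℝ} (hg : Tendsto (fun S => S / g S) atTop atTop)
    (a : ℝ) : Tendsto (fun S => (a - S) / g S) atTop atBot := by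
  have hfactor : Tendsto (fun S : ℝ => a / S - 1) atTop (𝓝 (-1)) := by
    simpa only [zero_sub, id_eq] using (tendsto_id.const_div_atTop a).sub_const 1
  refine (hg.atTop_mul_neg neg_one_lt_zero hfactor).congr' ?_
  filter_upwards [eventually_ne_atTop 0] with S hS
  field_simp

end Asymptotics

section FiniteIndex

variable {ι : Type*} [Fintype ι]

lemma mul_exp_expect_le_sum_mul_exp [Nonempty ι] {c : ℝ} {γ : ι → ℝ} (hc : 0 ≤ c)
    (hγ : ∀ k, c ≤ γ k) (x : ι → ℝ) :
    c * Real.exp (𝔼 k, x k) ≤ ∑ k, γ k * Real.exp (x k) := by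
  obtain ⟨k, -, hk⟩ := Finset.exists_le_of_le_expect Finset.univ_nonempty (le_refl (𝔼 k, x k))
  calc c * Real.exp (𝔼 k, x k) ≤ γ k * Real.exp (x k) :=
        mul_le_mul (hγ k) (Real.exp_le_exp.2 hk) (Real.exp_pos _).le (hc.trans (hγ k))
    _ ≤ ∑ k, γ k * Real.exp (x k) :=
        Finset.single_le_sum (f := fun k => γ k * Real.exp (x k))
          (fun j _ => mul_nonneg (hc.trans (hγ j)) (Real.exp_pos _).le) (Finset.mem_univ k)

lemma piLp_two_norm_le_sum_norm {E : ι → Type*} [∀ j, SeminormedAddCommGroup (E j)]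
    (x : PiLp 2 E) : ‖x‖ ≤ ∑ j, ‖x j‖ := by
  rw [PiLp.norm_eq_of_L2]
  exact Real.sqrt_le_iff.2 ⟨Finset.sum_nonneg fun j _ => norm_nonneg _,
    Finset.sum_sq_le_sq_sum_of_nonneg fun j _ => norm_nonneg _⟩

lemma tendsto_expect_mul_atTop [Nonempty ι] {α : ι → ℝ} (hα : ∀ j, 0 < α j) :
    Tendsto (fun q : EuclideanSpace ℝ ι => 𝔼 j, α j * q j)
      (cobounded _ ⊓ 𝓟 {q | ∀ j, 0 ≤ q j}) atTop := by
  obtain ⟨a, ha, haα⟩ := Pi.exists_forall_pos_add_lt hα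
  have hnorm : Tendsto (fun q : EuclideanSpace ℝ ι => a * ‖q‖ / Fintype.card ι)
      (cobounded _ ⊓ 𝓟 {q | ∀ j, 0 ≤ q j}) atTop :=
    ((tendsto_norm_cobounded_atTop.mono_left inf_le_left).const_mul_atTop ha).atTop_div_const
      (Nat.cast_pos.2 Fintype.card_pos)
  refine tendsto_atTop_mono' _ ?_ hnorm
  filter_upwards [mem_inf_of_right (mem_principal_self _)] with q hq
  rw [Fintype.expect_eq_sum_div_card]
  gcongr
  calc a * ‖q‖ ≤ a * ∑ j, ‖q j‖ := by gcongr; exact piLp_two_norm_le_sum_norm q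
    _ = ∑ j, a * q j := by simp only [Finset.mul_sum, Real.norm_of_nonneg (hq _)]
    _ ≤ ∑ j, α j * q j := Finset.sum_le_sum fun j _ =>
        mul_le_mul_of_nonneg_right (by simpa using (haα j).le) (hq j)

/-- Condition 2 for a weight map on the nonnegative orthant: for large `q`, every index whose queue
length `q i` is below a given level gets arbitrarily small weight. Values of `μ` outside the orthant
are irrelevant. -/
def Condition2 (μ : EuclideanSpace ℝ ι → ι → ℝ) : Prop :=
  ∀ ε ∈ Set.Ioo (0 : ℝ) 1, ∀ C > (0 : ℝ), ∃ B > (0 : ℝ), ∀ i, ∀ q : EuclideanSpace ℝ ι,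
    (∀ j, 0 ≤ q j) → ‖q‖ > B → q i < C → μ q i ≤ ε

lemma condition2_of_tendsto {μ : EuclideanSpace ℝ ι → ι → ℝ}
    (hμ : ∀ i C, Tendsto (fun q => μ q i)
      (cobounded _ ⊓ 𝓟 {q | (∀ j, 0 ≤ q j) ∧ q i ≤ C}) (𝓝 0)) : Condition2 μ := by
  intro ε hε C _
  have hsmall : ∀ᶠ q in cobounded (EuclideanSpace ℝ ι),
      ∀ i, (∀ j, 0 ≤ q j) ∧ q i ≤ C → μ q i ≤ ε :=
    eventually_all.2 fun i => eventually_inf_principal.1 ((hμ i C).eventually_le_const hε.1)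
  obtain ⟨B, -, hB⟩ := hasBasis_cobounded_norm.eventually_iff.1 hsmall
  refine ⟨max B 1, by positivity, fun i q hq hqB hqi => ?_⟩
  exact hB ((le_max_left B 1).trans hqB.le) i ⟨hq, hqi.le⟩

/-- The normalized weights of the exponential rule with a general denominator `g` in the exponent,
evaluated at the mean of the `α j * q j`; the exponential rule proper has `g S = β + S ^ η`. -/
noncomputable def expRule (γ α : ι → ℝ) (g : ℝ → ℝ) (q : EuclideanSpace ℝ ι) (i : ι) : ℝ :=
  γ i * Real.exp (α i * q i / g (𝔼 j, α j * q j)) /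
    ∑ k, γ k * Real.exp (α k * q k / g (𝔼 j, α j * q j))

lemma expRule_nonneg {γ : ι → ℝ} (hγ : ∀ k, 0 ≤ γ k) (α : ι → ℝ) (g : ℝ → ℝ)
    (q : EuclideanSpace ℝ ι) (i : ι) : 0 ≤ expRule γ α g q i :=
  div_nonneg (mul_nonneg (hγ i) (Real.exp_pos _).le)
    (Finset.sum_nonneg fun k _ => mul_nonneg (hγ k) (Real.exp_pos _).le)

lemma expRule_le_mul_exp {c : ℝ} {γ : ι → ℝ} (hc : 0 < c) (hγ : ∀ k, c ≤ γ k) (α : ι → ℝ)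
    (g : ℝ → ℝ) (q : EuclideanSpace ℝ ι) (i : ι) :
    expRule γ α g q i ≤
      γ i / c * Real.exp ((α i * q i - 𝔼 j, α j * q j) / g (𝔼 j, α j * q j)) := by
  have : Nonempty ι := ⟨i⟩
  have hγi : 0 ≤ γ i := hc.le.trans (hγ i)
  have htotal := mul_exp_expect_le_sum_mul_exp hc.le hγ
    fun k => α k * q k / g (𝔼 j, α j * q j)
  rw [← Finset.expect_div] at htotal
  rw [sub_div, Real.exp_sub, ← mul_div_mul_comm]
  exact div_le_div_of_nonneg_left (by positivity) (by positivity) htotal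

lemma tendsto_expRule_zero {γ α : ι → ℝ} (hγ : ∀ k, 0 < γ k) (hα : ∀ k, 0 < α k) {g : ℝ → ℝ}
    (hg : Tendsto (fun S => S / g S) atTop atTop) (i : ι) (C : ℝ) :
    Tendsto (fun q => expRule γ α g q i)
      (cobounded _ ⊓ 𝓟 {q | (∀ j, 0 ≤ q j) ∧ q i ≤ C}) (𝓝 0) := by
  have : Nonempty ι := ⟨i⟩
  obtain ⟨c, hc, hcγ⟩ := Pi.exists_forall_pos_add_lt hγ
  have hcγ' : ∀ k, c ≤ γ k := fun k => by simpa using (hcγ k).le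
  have hmean : Tendsto (fun q : EuclideanSpace ℝ ι => 𝔼 j, α j * q j)
      (cobounded _ ⊓ 𝓟 {q | (∀ j, 0 ≤ q j) ∧ q i ≤ C}) atTop :=
    (tendsto_expect_mul_atTop hα).mono_left
      (inf_le_inf_left _ (principal_mono.2 fun _ hq => hq.1))
  have hbound := ((Real.tendsto_exp_atBot.comp
    (tendsto_const_sub_div_atBot hg (α i * C))).comp hmean).const_mul (γ i / c)
  rw [mul_zero] at hbound
  refine squeeze_zero' (.of_forall fun q => expRule_nonneg (fun k => (hγ k).le) α g q i) ?_ hbound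
  filter_upwards [hmean.eventually (eventually_pos_of_tendsto_self_div_atTop hg),
    mem_inf_of_right (mem_principal_self _)] with q hgq hq
  refine (expRule_le_mul_exp hc hcγ' α g q i).trans ?_
  have hγi := (hγ i).le
  have hαi := (hα i).le
  dsimp only [Function.comp_apply]
  gcongr
  exact hq.2

theorem stmt_4_general {γ α : ι → ℝ} (hγ : ∀ k, 0 < γ k) (hα : ∀ k, 0 < α k) {g : ℝ → ℝ}
    (hg : Tendsto (fun S => S / g S) atTop atTop) : Condition2 (expRule γ α g) :=
  condition2_of_tendsto (tendsto_expRule_zero hγ hα hg)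

end FiniteIndex

/-- The normalized exponential-rule weight map satisfies Condition 2. -/
theorem stmt_4 (M : ℕ) (hM : 1 ≤ M) (γ α : Fin M → ℝ)
    (hγ : ∀ k, 0 < γ k) (hα : ∀ k, 0 < α k) (β : ℝ) (hβ : 0 < β)
    (η : ℝ) (hη : η ∈ Set.Ioo (0 : ℝ) 1)
    (w : EuclideanSpace ℝ (Fin M) → Fin M → ℝ)
    (hw : ∀ q k, w q k =
      γ k * Real.exp (α k * q k / (β + ((1 / (M : ℝ)) * ∑ j, α j * q j) ^ η)))
    (μ : EuclideanSpace ℝ (Fin M) → Fin M → ℝ)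
    (hμ : ∀ q i, μ q i = w q i / ∑ k, w q k) :
    ∀ ε ∈ Set.Ioo (0 : ℝ) 1, ∀ C > (0 : ℝ), ∃ B > (0 : ℝ),
      ∀ i : Fin M, ∀ q : EuclideanSpace ℝ (Fin M),
        (∀ j, 0 ≤ q j) → ‖q‖ > B → q i < C →
          μ q i ≤ ε := by
  obtain rfl : μ = expRule γ α fun S => β + S ^ η := by
    ext q i
    simp only [hμ, hw, expRule, Fintype.expect_eq_sum_div_card, Fintype.card_fin,
      one_div_mul_eq_div]
  exact stmt_4_general hγ hα (tendsto_self_div_add_rpow_atTop hβ.le hη.2)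
end

section
/- Let M ≥ 1 and for each k = 1,…,M let μ_k : ℝ₊ → ℝ₊ be a nondecreasing continuous function with μ_k(x) → +∞ as x → +∞. Fix an index i. Then for every ε ∈ (0,1) and every C > 0 there exists B > 0 such that for every q ∈ ℝ₊^M with ‖q‖ > B and q_i ≤ C, one has μ_i(q_i) ≤ ε · Σ_{k=1}^M μ_k(q_k). In other words, the normalized weight vector μ̄_i(q) = μ_i(q_i)/Σ_k μ_k(q_k) of an Eryilmaz-type policy satisfies Condition 2 at coordinate i. -/
/-!
A sum of nonnegative functions of separate coordinates tends to infinity as soon as one coordinate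
escapes and each function tends to infinity, and `‖q‖ → ∞` forces some coordinate to escape. So the
total weight tends to infinity with `‖q‖`, while the weight of a user whose queue stays below `C` is
bounded.
-/

open scoped BigOperators

section SeparableSum

open Filter Bornology

variable {ι : Type*}

theorem tendsto_ofLp_cobounded_coprodᵢ (p : ENNReal) {E : ι → Type*} [∀ k, Bornology (E k)] :
    Tendsto (WithLp.ofLp : PiLp p E → ∀ k, E k) (cobounded (PiLp p E))
      (Filter.coprodᵢ fun k => cobounded (E k)) := by
  rw [← cobounded_pi]
  exact tendsto_comap

variable [Fintype ι]

theorem tendsto_sum_apply_coprodᵢ_atTop {X : ι → Type*} {R : Type*} [AddCommMonoid R]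
    [PartialOrder R] [IsOrderedAddMonoid R] {l : ∀ k, Filter (X k)} {f : ∀ k, X k → R}
    (hnonneg : ∀ k x, 0 ≤ f k x) (htop : ∀ k, Tendsto (f k) (l k) atTop) :
    Tendsto (fun x : ∀ k, X k => ∑ k, f k (x k)) (Filter.coprodᵢ l) atTop := by
  refine tendsto_iSup.2 fun j => ?_
  have hsummand : Tendsto (fun x : ∀ k, X k => f j (x j)) (comap (Function.eval j) (l j)) atTop :=
    (htop j).comp tendsto_comap
  have hle_sum (x : ∀ k, X k) : f j (x j) ≤ ∑ k, f k (x k) :=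
    Finset.single_le_sum (f := fun k => f k (x k)) (fun k _ => hnonneg k _) (Finset.mem_univ j)
  exact tendsto_atTop_mono hle_sum hsummand

theorem tendsto_sum_comp_norm_cobounded_atTop (p : ENNReal) {E : ι → Type*}
    [∀ k, SeminormedAddCommGroup (E k)] {R : Type*} [AddCommMonoid R] [PartialOrder R]
    [IsOrderedAddMonoid R] {μ : ι → ℝ → R} (hnonneg : ∀ k, ∀ x : ℝ, 0 ≤ x → 0 ≤ μ k x)
    (htop : ∀ k, Tendsto (μ k) atTop atTop) :
    Tendsto (fun q : PiLp p E => ∑ k, μ k ‖q k‖) (cobounded (PiLp p E)) atTop := by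
  have hradial (k : ι) : Tendsto (fun x : E k => μ k ‖x‖) (cobounded (E k)) atTop :=
    (htop k).comp tendsto_norm_cobounded_atTop
  exact (tendsto_sum_apply_coprodᵢ_atTop (fun k x => hnonneg k _ (norm_nonneg x)) hradial).comp
    (tendsto_ofLp_cobounded_coprodᵢ p)

theorem stmt_5_general (p : ENNReal) [Fact (1 ≤ p)] {μ : ι → ℝ → ℝ}
    (hnonneg : ∀ k, ∀ x : ℝ, 0 ≤ x → 0 ≤ μ k x) (htop : ∀ k, Tendsto (μ k) atTop atTop)
    {i : ι} {C : ℝ} (hbdd : BddAbove (μ i '' Set.Icc 0 C)) {ε : ℝ} (hε : 0 < ε) :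
    ∃ B > (0 : ℝ), ∀ q : PiLp p (fun _ : ι => ℝ), (∀ j, 0 ≤ q j) → ‖q‖ > B → q i ≤ C →
      μ i (q i) ≤ ε * ∑ k, μ k (q k) := by
  obtain ⟨K, hK⟩ := hbdd
  have hlarge : ∀ᶠ q : PiLp p (fun _ : ι => ℝ) in cobounded _, K / ε ≤ ∑ k, μ k ‖q k‖ :=
    (tendsto_sum_comp_norm_cobounded_atTop p hnonneg htop).eventually_ge_atTop _
  rw [← comap_norm_atTop, ((atTop_basis_Ioi' 0).comap _).eventually_iff] at hlarge
  obtain ⟨B, hB, hfar⟩ := hlarge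
  refine ⟨B, hB, fun q hq hqB hqi => ?_⟩
  have hsum : K / ε ≤ ∑ k, μ k (q k) := by
    simpa only [Real.norm_of_nonneg (hq _)] using hfar hqB
  calc μ i (q i) ≤ K := hK ⟨q i, ⟨hq i, hqi⟩, rfl⟩
    _ ≤ ε * ∑ k, μ k (q k) := (div_le_iff₀' hε).1 hsum

end SeparableSum

/-- For Eryilmaz-type per-user weight functions (nondecreasing, continuous, tending to
infinity), the normalized weight `μ i (q i) / ∑ k, μ k (q k)` satisfies Condition 2 at
coordinate `i`. -/
theorem stmt_5 (M : ℕ) (hM : 1 ≤ M) (μ : Fin M → ℝ → ℝ)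
    (hnonneg : ∀ k, ∀ x : ℝ, 0 ≤ x → 0 ≤ μ k x)
    (hmono : ∀ k, MonotoneOn (μ k) (Set.Ici (0 : ℝ)))
    (hcont : ∀ k, ContinuousOn (μ k) (Set.Ici (0 : ℝ)))
    (htop : ∀ k, Filter.Tendsto (μ k) Filter.atTop Filter.atTop)
    (i : Fin M) :
    ∀ ε ∈ Set.Ioo (0 : ℝ) 1, ∀ C > (0 : ℝ), ∃ B > (0 : ℝ),
      ∀ q : EuclideanSpace ℝ (Fin M), (∀ j, 0 ≤ q j) → ‖q‖ > B → q i ≤ C →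
        μ i (q i) ≤ ε * ∑ k, μ k (q k) := by
  exact fun ε hε C hC => stmt_5_general 2 hnonneg htop
    ((hmono i).map_bddAbove Set.Icc_subset_Ici_self ⟨C, fun _ hx => hx.2, hC.le⟩) hε.1
end

section
/- Let M ≥ 1 and for each k = 1,…,M let μ_k : ℝ₊ → (0,∞) be a nondecreasing continuous function with μ_k(x) → +∞ as x → +∞, satisfying the Eryilmaz condition: for every ε ∈ (0,1) and all C₁ > 0, C₂ > 0 there exists B < +∞ such that for all x > B and all k, (1−ε)μ_k(x) ≤ μ_k(x−C₁) ≤ μ_k(x+C₂) ≤ (1+ε)μ_k(x). Then the normalized weight map μ̄_i(q) = μ_i(q_i)/Σ_{k=1}^M μ_k(q_k) on ℝ₊^M satisfies Condition 1: for every ε₁ ∈ (0,1) and every C > 0 there exists B > 0 such that |μ̄_i(q+Δq) − μ̄_i(q)| ≤ ε₁ for every index i, every q ∈ ℝ₊^M with ‖q‖ > B, and every Δq ∈ ℝ^M with ‖Δq‖ < C and q + Δq ∈ ℝ₊^M. -/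
open scoped BigOperators

/-!
Let `S` be the sum of the weights at `x`, and let `D` be the sum of the absolute changes of the
individual weights between `x` and a point within distance `C`. Each normalized weight changes by
at most `2 * D / S`. The change of a single weight is at most `δ` times that weight if its
coordinate is large, and by monotonicity it is bounded by a constant otherwise, so
`D ≤ δ * S + K` with `K` independent of `x`. As `x` goes to infinity in the orthant, so does `S`,
because the largest coordinate does; once `K ≤ δ * S`, the bound `2 * D / S` is at most `4 * δ`.
-/

open Filter Bornology Asymptotics Set

/-- The functions whose relative change under every fixed shift of the argument vanishes at
infinity, as for long-tailed distribution functions: the Eryilmaz condition in asymptotic form. -/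
def IsLongTailed (f : ℝ → ℝ) : Prop :=
  ∀ C : ℝ, (fun x => f (x + C)) ~[atTop] f

/-- Slow oscillation in the sense of coarse geometry, on a subset: at bounded scale the variation
of `g` on `s` vanishes at infinity. On the orthant of `ℝ^M`, with the sup distance on the values,
this is Condition 1. -/
def SlowlyOscillatingOn {X Y : Type*} [PseudoMetricSpace X] [PseudoMetricSpace Y]
    (g : X → Y) (s : Set X) : Prop :=
  ∀ ε > 0, ∀ C : ℝ, ∀ᶠ x in cobounded X ⊓ 𝓟 s, ∀ y ∈ s, dist y x < C → dist (g y) (g x) ≤ ε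

/-- The vector `μ̄` of weights `μ k (x k)`, each divided by their sum. -/
noncomputable def normalizedWeight {ι : Type*} [Fintype ι] (μ : ι → ℝ → ℝ) (x : ι → ℝ) : ι → ℝ :=
  fun i => μ i (x i) / ∑ k, μ k (x k)

theorem isLongTailed_of_eryilmaz {f : ℝ → ℝ} (hmono : MonotoneOn f (Ici 0))
    (hf : ∀ ε ∈ Ioo (0 : ℝ) 1, ∀ C > 0, ∀ᶠ x in atTop,
      (1 - ε) * f x ≤ f (x - C) ∧ f (x + C) ≤ (1 + ε) * f x) :
    IsLongTailed f := by
  refine fun C => IsLittleO.of_bound fun ε hε => ?_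
  have hδ : min ε (1 / 2) ∈ Ioo (0 : ℝ) 1 :=
    ⟨lt_min hε one_half_pos, (min_le_right _ _).trans_lt one_half_lt_one⟩
  filter_upwards [hf _ hδ (|C| + 1) (by positivity), eventually_ge_atTop (|C| + 1)]
    with x ⟨hlow, hhigh⟩ hx
  obtain ⟨hC₁, hC₂⟩ := abs_le.1 (le_refl |C|)
  have hleft : f (x - (|C| + 1)) ≤ f (x + C) :=
    hmono (mem_Ici.2 (by linarith)) (mem_Ici.2 (by linarith)) (by linarith)
  have hright : f (x + C) ≤ f (x + (|C| + 1)) :=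
    hmono (mem_Ici.2 (by linarith)) (mem_Ici.2 (by linarith)) (by linarith)
  calc |f (x + C) - f x| ≤ min ε (1 / 2) * f x := abs_le.2 ⟨by linarith, by linarith⟩
    _ ≤ min ε (1 / 2) * |f x| := mul_le_mul_of_nonneg_left (le_abs_self _) hδ.1.le
    _ ≤ ε * |f x| := mul_le_mul_of_nonneg_right (min_le_left _ _) (abs_nonneg _)

theorem IsLongTailed.exists_abs_sub_le {f : ℝ → ℝ} (hf : IsLongTailed f)
    (hmono : MonotoneOn f (Ici 0)) (hnonneg : ∀ x, 0 ≤ x → 0 ≤ f x) {δ : ℝ} (hδ : 0 < δ) (C : ℝ) :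
    ∃ K, ∀ x y, 0 ≤ x → 0 ≤ y → |y - x| ≤ C → |f y - f x| ≤ δ * f x + K := by
  have hlarge : ∀ᶠ x in atTop, |f (x + C) - f x| ≤ δ * |f x| ∧ |f (x + -C) - f x| ≤ δ * |f x| :=
    ((hf C).bound hδ).and ((hf (-C)).bound hδ)
  obtain ⟨B, hB⟩ := eventually_atTop.1 (hlarge.and (eventually_ge_atTop (max 0 C)))
  obtain ⟨hB₀, hBC⟩ := max_le_iff.1 (hB B le_rfl).2
  refine ⟨f (B + C), fun x y hx hy hxy => ?_⟩
  have hC : 0 ≤ C := (abs_nonneg _).trans hxy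
  obtain ⟨hyx₁, hyx₂⟩ := abs_le.1 hxy
  have hfx := hnonneg x hx
  have hfy := hnonneg y hy
  have hK := hnonneg (B + C) (by positivity)
  rcases le_total x B with hxB | hxB
  · have hfxK : f x ≤ f (B + C) := hmono hx (mem_Ici.2 (by positivity)) (by linarith)
    have hfyK : f y ≤ f (B + C) := hmono hy (mem_Ici.2 (by positivity)) (by linarith)
    calc |f y - f x| ≤ f (B + C) := abs_sub_le_of_nonneg_of_le hfy hfyK hfx hfxK
      _ ≤ δ * f x + f (B + C) := le_add_of_nonneg_left (by positivity)
  · obtain ⟨hright, hleft⟩ := (hB x hxB).1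
    rw [abs_of_nonneg hfx] at hright hleft
    have hfy_low : f (x + -C) ≤ f y := hmono (mem_Ici.2 (by linarith)) hy (by linarith)
    have hfy_high : f y ≤ f (x + C) := hmono hy (mem_Ici.2 (by linarith)) (by linarith)
    exact abs_le.2 ⟨by linarith [(abs_le.1 hleft).1], by linarith [(abs_le.1 hright).2]⟩

theorem abs_div_sum_sub_div_sum_le {ι K : Type*} [Fintype ι] [Field K] [LinearOrder K]
    [IsStrictOrderedRing K] {v w : ι → K} (hv : ∀ k, 0 ≤ v k) (hw : 0 < ∑ k, w k) (i : ι) :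
    |v i / ∑ k, v k - w i / ∑ k, w k| ≤ 2 * (∑ k, |v k - w k|) / ∑ k, w k := by
  have hvi : v i ≤ ∑ k, v k := Finset.single_le_sum (fun k _ => hv k) (Finset.mem_univ i)
  have hratio₀ : 0 ≤ v i / ∑ k, v k := div_nonneg (hv i) ((hv i).trans hvi)
  have hratio₁ : v i / ∑ k, v k ≤ 1 := div_le_one_of_le₀ hvi ((hv i).trans hvi)
  have hcancel : v i / (∑ k, v k) * ∑ k, v k = v i :=
    div_mul_cancel_of_imp fun h => le_antisymm (hvi.trans h.le) (hv i)
  have hsplit : v i / ∑ k, v k - w i / ∑ k, w k =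
      (v i - w i - v i / (∑ k, v k) * ∑ k, (v k - w k)) / ∑ k, w k := by
    rw [Finset.sum_sub_distrib, mul_sub, hcancel, eq_div_iff hw.ne', sub_mul,
      div_mul_cancel₀ _ hw.ne']
    ring
  have hnum : |v i - w i| ≤ ∑ k, |v k - w k| :=
    Finset.single_le_sum (f := fun k => |v k - w k|) (fun _ _ => abs_nonneg _) (Finset.mem_univ i)
  have hden : |v i / (∑ k, v k) * ∑ k, (v k - w k)| ≤ ∑ k, |v k - w k| := by
    rw [abs_mul, abs_of_nonneg hratio₀]
    exact (mul_le_of_le_one_left (abs_nonneg _) hratio₁).trans (Finset.abs_sum_le_sum_abs _ _)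
  rw [hsplit, abs_div, abs_of_pos hw, two_mul]
  gcongr
  exact (abs_sub _ _).trans (add_le_add hnum hden)

theorem SlowlyOscillatingOn.exists_norm_bound {E Y : Type*} [SeminormedAddCommGroup E]
    [PseudoMetricSpace Y] {g : E → Y} {s : Set E} (hg : SlowlyOscillatingOn g s)
    {ε : ℝ} (hε : 0 < ε) (C : ℝ) :
    ∃ B > 0, ∀ x ∈ s, B < ‖x‖ → ∀ d, ‖d‖ < C → x + d ∈ s → dist (g (x + d)) (g x) ≤ ε := by
  obtain ⟨B, -, hB⟩ :=
    hasBasis_cobounded_norm.eventually_iff.1 (eventually_inf_principal.1 (hg ε hε C))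
  refine ⟨max B 1, by positivity, fun x hx hBx d hd hxd => ?_⟩
  exact hB ((le_max_left B 1).trans hBx.le) hx _ hxd (by simpa using hd)

section Weights

variable {ι : Type*} [Fintype ι] {μ : ι → ℝ → ℝ}

theorem exists_sum_abs_sub_le (hlong : ∀ k, IsLongTailed (μ k))
    (hmono : ∀ k, MonotoneOn (μ k) (Ici 0)) (hnonneg : ∀ k x, 0 ≤ x → 0 ≤ μ k x)
    {δ : ℝ} (hδ : 0 < δ) (C : ℝ) :
    ∃ K, ∀ x y : ι → ℝ, (∀ k, 0 ≤ x k) → (∀ k, 0 ≤ y k) → (∀ k, |y k - x k| ≤ C) →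
      ∑ k, |μ k (y k) - μ k (x k)| ≤ δ * ∑ k, μ k (x k) + K := by
  choose K hK using fun k => (hlong k).exists_abs_sub_le (hmono k) (hnonneg k) hδ C
  refine ⟨∑ k, K k, fun x y hx hy hxy => ?_⟩
  rw [Finset.mul_sum, ← Finset.sum_add_distrib]
  exact Finset.sum_le_sum fun k _ => hK k _ _ (hx k) (hy k) (hxy k)

theorem tendsto_sum_cobounded_inf_orthant (hnonneg : ∀ k x, 0 ≤ x → 0 ≤ μ k x)
    (htop : ∀ k, Tendsto (μ k) atTop atTop) :
    Tendsto (fun x : ι → ℝ => ∑ k, μ k (x k)) (cobounded (ι → ℝ) ⊓ 𝓟 {x | ∀ k, 0 ≤ x k})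
      atTop := by
  refine tendsto_atTop.2 fun A => eventually_inf_principal.2 ?_
  rw [cobounded_pi, Filter.coprodᵢ, eventually_iSup]
  intro i
  have hcoord : ∀ᶠ t in cobounded ℝ, 0 ≤ t → A ≤ μ i t := by
    rw [IsOrderBornology.cobounded_eq, eventually_sup]
    exact ⟨(eventually_lt_atBot 0).mono fun t ht ht₀ => absurd ht₀ ht.not_ge,
      ((htop i).eventually_ge_atTop A).mono fun t ht _ => ht⟩
  exact (hcoord.comap fun x : ι → ℝ => x i).mono fun x hx hx₀ =>
    (hx (hx₀ i)).trans <| Finset.single_le_sum (f := fun k => μ k (x k))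
      (fun k _ => hnonneg k _ (hx₀ k)) (Finset.mem_univ i)

theorem stmt_6_general {p : ENNReal} [Fact (1 ≤ p)] (hnonneg : ∀ k x, 0 ≤ x → 0 ≤ μ k x)
    (hmono : ∀ k, MonotoneOn (μ k) (Ici 0)) (htop : ∀ k, Tendsto (μ k) atTop atTop)
    (hlong : ∀ k, IsLongTailed (μ k)) :
    SlowlyOscillatingOn (fun q : PiLp p fun _ : ι => ℝ => normalizedWeight μ q)
      {q | ∀ k, 0 ≤ q k} := by
  intro ε hε C
  obtain ⟨K, hK⟩ := exists_sum_abs_sub_le hlong hmono hnonneg (show 0 < ε / 4 by positivity) C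
  have hsum : Tendsto (fun q : PiLp p fun _ : ι => ℝ => ∑ k, μ k (q k))
      (cobounded _ ⊓ 𝓟 {q | ∀ k, 0 ≤ q k}) atTop :=
    (tendsto_sum_cobounded_inf_orthant hnonneg htop).comp <|
      (PiLp.antilipschitzWith_ofLp p fun _ : ι => ℝ).tendsto_cobounded.inf
        (tendsto_principal_principal.2 fun _ hq => hq)
  filter_upwards [hsum.eventually_gt_atTop 0,
    (hsum.const_mul_atTop (show 0 < ε / 4 by positivity)).eventually_ge_atTop K,
    mem_inf_of_right (mem_principal_self _)] with q hpos hKq hq q' hq' hdist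
  refine (dist_pi_le_iff hε.le).2 fun i => ?_
  have hchange := hK q q' hq hq' fun k => (PiLp.dist_apply_le q' q k).trans hdist.le
  calc |normalizedWeight μ q' i - normalizedWeight μ q i|
      ≤ 2 * (∑ k, |μ k (q' k) - μ k (q k)|) / ∑ k, μ k (q k) :=
        abs_div_sum_sub_div_sum_le (fun k => hnonneg k _ (hq' k)) hpos i
    _ ≤ ε := (div_le_iff₀ hpos).2 (by linarith)

end Weights

/-- For Eryilmaz-type per-user weight functions satisfying the Eryilmaz condition, the
normalized weight map `μ̄ i q = μ i (q i) / ∑ k, μ k (q k)` satisfies Condition 1. -/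
theorem stmt_6 (M : ℕ) (hM : 1 ≤ M) (μ : Fin M → ℝ → ℝ)
    (hpos : ∀ k, ∀ x : ℝ, 0 ≤ x → 0 < μ k x)
    (hmono : ∀ k, MonotoneOn (μ k) (Set.Ici (0 : ℝ)))
    (hcont : ∀ k, ContinuousOn (μ k) (Set.Ici (0 : ℝ)))
    (htop : ∀ k, Filter.Tendsto (μ k) Filter.atTop Filter.atTop)
    (hery : ∀ ε ∈ Set.Ioo (0 : ℝ) 1, ∀ C₁ > (0 : ℝ), ∀ C₂ > (0 : ℝ), ∃ B : ℝ,
      ∀ x > B, ∀ k, (1 - ε) * μ k x ≤ μ k (x - C₁) ∧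
        μ k (x - C₁) ≤ μ k (x + C₂) ∧ μ k (x + C₂) ≤ (1 + ε) * μ k x) :
    ∀ ε₁ ∈ Set.Ioo (0 : ℝ) 1, ∀ C > (0 : ℝ), ∃ B > (0 : ℝ),
      ∀ i : Fin M, ∀ q : EuclideanSpace ℝ (Fin M), (∀ j, 0 ≤ q j) → ‖q‖ > B →
        ∀ Δq : EuclideanSpace ℝ (Fin M), ‖Δq‖ < C → (∀ j, 0 ≤ q j + Δq j) →
          |μ i (q i + Δq i) / (∑ k, μ k (q k + Δq k)) -
            μ i (q i) / (∑ k, μ k (q k))| ≤ ε₁ := by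
  intro ε hε C _
  have hlong k : IsLongTailed (μ k) := isLongTailed_of_eryilmaz (hmono k) fun δ hδ C' hC' =>
    let ⟨B, hB⟩ := hery δ hδ C' hC' C' hC'
    (eventually_gt_atTop B).mono fun x hx => ⟨(hB x hx k).1, (hB x hx k).2.2⟩
  obtain ⟨B, hB, hosc⟩ := (stmt_6_general (p := 2) (fun k x hx => (hpos k x hx).le) hmono htop
    hlong).exists_norm_bound hε.1 C
  exact ⟨B, hB, fun i q hq hqB Δq hΔq hqΔq =>
    (dist_le_pi_dist _ _ i).trans (hosc q hq hqB Δq hΔq hqΔq)⟩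
end

section
/- Let M ≥ 1, let S = { x ∈ ℝ₊^M : ‖x‖₂ = 1 }, and let g : S → ℝ^M be continuous with g_i(x) = 0 for every index i and every x ∈ S with x_i = 0. Define μ̄(q) = g( q/‖q‖₂ ) for q ∈ ℝ₊^M with q ≠ 0. Then μ̄ satisfies Condition 2: for every ε ∈ (0,1) and every C > 0 there exists B > 0 such that |μ̄_i(q)| ≤ ε for every index i and every q ∈ ℝ₊^M \ {0} with ‖q‖₂ > B and q_i < C. -/
/-!
Along states `q` whose norm tends to infinity while the coordinate `q_i` stays bounded, the
normalized coordinate `q_i / ‖q‖` tends to `0`. On the compact set `S`, this forces the normalized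
state to approach the face `{x ∈ S | x_i = 0}`, where `g_i` vanishes; hence `g_i (q / ‖q‖) → 0` by
continuity.
-/

open scoped BigOperators

open Bornology Filter Topology

section Compact

variable {α X Y Z : Type*} [TopologicalSpace X] [TopologicalSpace Y] [T2Space Y]
  [TopologicalSpace Z]

theorem tendsto_comp_of_tendsto_comp_of_isCompact {K : Set X} {u : X → Y} {v : X → Z} {y : Y}
    {z : Z} (hK : IsCompact K) (hu : ContinuousOn u K) (hv : ContinuousOn v K)
    (huv : ∀ x ∈ K, u x = y → v x = z) {l : Filter α} {f : α → X} (hf : ∀ᶠ a in l, f a ∈ K)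
    (huf : Tendsto (u ∘ f) l (𝓝 y)) : Tendsto (v ∘ f) l (𝓝 z) := by
  refine (tendsto_iff_ultrafilter _ _ _).2 fun U hU => ?_
  have hUK : ∀ᶠ a in U, f a ∈ K := hU hf
  obtain ⟨x, hxK, hUx⟩ := hK.ultrafilter_le_nhds' (U.map f) hUK
  have hfx : Tendsto f U (𝓝[K] x) := tendsto_nhdsWithin_iff.2 ⟨hUx, hUK⟩
  have hux : u x = y := tendsto_nhds_unique ((hu x hxK).tendsto.comp hfx) (huf.mono_left hU)
  exact huv x hxK hux ▸ (hv x hxK).tendsto.comp hfx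

end Compact

section Orthant

variable {ι : Type*} [Fintype ι]

variable (ι) in
/-- The set `S` of unit vectors in the nonnegative orthant, in which normalized queue states lie. -/
def nonnegUnitSphere : Set (EuclideanSpace ℝ ι) :=
  {x | (∀ i, 0 ≤ x i) ∧ ‖x‖ = 1}

variable (ι) in
theorem isCompact_nonnegUnitSphere : IsCompact (nonnegUnitSphere ι) := by
  have h_orthant : IsClosed {x : EuclideanSpace ℝ ι | ∀ i, 0 ≤ x i} := by
    simp only [Set.ofPred_forall]
    exact isClosed_iInter fun i => isClosed_le continuous_const (by fun_prop)
  have h_eq : nonnegUnitSphere ι = {x | ∀ i, 0 ≤ x i} ∩ Metric.sphere 0 1 :=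
    Set.ext fun _ => and_congr_right' mem_sphere_zero_iff_norm.symm
  exact h_eq ▸ (isCompact_sphere 0 1).inter_left h_orthant

theorem normalize_mem_nonnegUnitSphere {q : EuclideanSpace ℝ ι} (hq : ∀ i, 0 ≤ q i)
    (hq0 : q ≠ 0) : NormedSpace.normalize q ∈ nonnegUnitSphere ι :=
  ⟨fun i => mul_nonneg (inv_nonneg.2 (norm_nonneg q)) (hq i), NormedSpace.norm_normalize hq0⟩

end Orthant

section Normalize

variable {E : Type*} [NormedAddCommGroup E] [NormedSpace ℝ E]

theorem tendsto_map_normalize_zero {F : Type*} [SeminormedAddCommGroup F] [NormedSpace ℝ F]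
    (u : E →ₗ[ℝ] F) {l : Filter E} (hl : l ≤ cobounded E)
    (hu : IsBoundedUnder (· ≤ ·) l (norm ∘ u)) : Tendsto (u ∘ NormedSpace.normalize) l (𝓝 0) := by
  have h_inv : Tendsto (fun q : E => ‖q‖⁻¹) l (𝓝 0) :=
    tendsto_inv_atTop_zero.comp (tendsto_norm_cobounded_atTop.mono_left hl)
  exact (h_inv.zero_smul_isBoundedUnder_le hu).congr fun q => (map_smul u _ q).symm

variable {F : Type*} [NormedAddCommGroup F] [NormedSpace ℝ F]

theorem tendsto_comp_normalize {Z : Type*} [TopologicalSpace Z] {S : Set E} (hS : IsCompact S)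
    {u : E →L[ℝ] F} {v : E → Z} {z : Z} (hv : ContinuousOn v S)
    (huv : ∀ x ∈ S, u x = 0 → v x = z) {l : Filter E} (hl : l ≤ cobounded E)
    (hlS : ∀ᶠ q in l, NormedSpace.normalize q ∈ S) (hu : IsBoundedUnder (· ≤ ·) l (norm ∘ u)) :
    Tendsto (v ∘ NormedSpace.normalize) l (𝓝 z) :=
  tendsto_comp_of_tendsto_comp_of_isCompact hS u.continuous.continuousOn hv huv hlS
    (tendsto_map_normalize_zero u.toLinearMap hl hu)

theorem eventually_norm_comp_normalize_le {G : Type*} [SeminormedAddCommGroup G] {S : Set E}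
    (hS : IsCompact S) {u : E →L[ℝ] F} {v : E → G} (hv : ContinuousOn v S)
    (huv : ∀ x ∈ S, u x = 0 → v x = 0) {ε : ℝ} (hε : 0 < ε) (C : ℝ) :
    ∀ᶠ q in cobounded E, NormedSpace.normalize q ∈ S → ‖u q‖ < C →
      ‖v (NormedSpace.normalize q)‖ ≤ ε := by
  let l : Filter E := cobounded E ⊓ 𝓟 {q | NormedSpace.normalize q ∈ S ∧ ‖u q‖ < C}
  have hl : ∀ᶠ q in l, NormedSpace.normalize q ∈ S ∧ ‖u q‖ < C :=
    mem_inf_of_right (mem_principal_self _)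
  have h_bdd : IsBoundedUnder (· ≤ ·) l (norm ∘ u) :=
    isBoundedUnder_of_eventually_le (hl.mono fun _ hq => hq.2.le)
  have h_lim : Tendsto (v ∘ NormedSpace.normalize) l (𝓝 0) :=
    tendsto_comp_normalize hS hv huv inf_le_left (hl.mono fun _ hq => hq.1) h_bdd
  have h_le : ∀ᶠ q in l, ‖v (NormedSpace.normalize q)‖ ≤ ε :=
    (tendsto_zero_iff_norm_tendsto_zero.1 h_lim).eventually_le_const hε
  exact (eventually_inf_principal.1 h_le).mono fun _ h hqS hqC => h ⟨hqS, hqC⟩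

/-- `u i` plays the role of the queue coordinate `q ↦ q i`, and `v i` that of the weight
`x ↦ g x i`. -/
theorem stmt_8_general {ι G : Type*} [Finite ι] [SeminormedAddCommGroup G] {S : Set E}
    (hS : IsCompact S) {u : ι → E →L[ℝ] F} {v : ι → E → G} (hv : ∀ i, ContinuousOn (v i) S)
    (huv : ∀ i, ∀ x ∈ S, u i x = 0 → v i x = 0) {ε : ℝ} (hε : 0 < ε) (C : ℝ) :
    ∃ B > (0 : ℝ), ∀ i q, NormedSpace.normalize q ∈ S → B < ‖q‖ → ‖u i q‖ < C →
      ‖v i (NormedSpace.normalize q)‖ ≤ ε := by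
  have h_all := eventually_all.2 fun i => eventually_norm_comp_normalize_le hS (hv i) (huv i) hε C
  obtain ⟨R, -, hR⟩ := hasBasis_cobounded_norm.eventually_iff.1 h_all
  refine ⟨max R 1, by positivity, fun i q hqS hRq hqC => hR ?_ i hqS hqC⟩
  exact (le_max_left R 1).trans hRq.le

end Normalize

/-- A scale-invariant weight map `μ̄ q = g (q / ‖q‖₂)` given by a continuous function `g`
on the intersection `S` of the unit sphere with the nonnegative orthant, whose `i`-th
component vanishes when the `i`-th coordinate vanishes, satisfies Condition 2. -/
theorem stmt_8 (M : ℕ) (hM : 1 ≤ M)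
    (g : EuclideanSpace ℝ (Fin M) → EuclideanSpace ℝ (Fin M))
    (hg : ContinuousOn g {x : EuclideanSpace ℝ (Fin M) | (∀ i, 0 ≤ x i) ∧ ‖x‖ = 1})
    (hg0 : ∀ x : EuclideanSpace ℝ (Fin M), ((∀ i, 0 ≤ x i) ∧ ‖x‖ = 1) →
      ∀ i, x i = 0 → g x i = 0) :
    ∀ ε ∈ Set.Ioo (0 : ℝ) 1, ∀ C > (0 : ℝ), ∃ B > (0 : ℝ),
      ∀ i : Fin M, ∀ q : EuclideanSpace ℝ (Fin M),
        (∀ j, 0 ≤ q j) → q ≠ 0 → ‖q‖ > B → q i < C →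
          |g (‖q‖⁻¹ • q) i| ≤ ε := by
  rintro ε ⟨hε, -⟩ C -
  obtain ⟨B, hB, h⟩ := stmt_8_general (isCompact_nonnegUnitSphere (Fin M))
    (u := fun i => (EuclideanSpace.proj i : EuclideanSpace ℝ (Fin M) →L[ℝ] ℝ))
    (v := fun i x => g x i) (fun i => (EuclideanSpace.proj i).continuous.comp_continuousOn hg)
    (fun i x hx => hg0 x hx i) hε C
  exact ⟨B, hB, fun i q hq hq0 hBq hqC => h i q (normalize_mem_nonnegUnitSphere hq hq0) hBq <|
    (Real.norm_of_nonneg (hq i)).trans_lt hqC⟩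
end

section
/- Let M ≥ 1, let ā_1,…,ā_M > 0 be constants, and let η_j : ℝ₊^M → ℝ₊ for j = 1,…,M satisfy: (i) for every C > 0 there exists D > 0 such that |η_j(q+Δq) − η_j(q)| ≤ D for all j, all q ∈ ℝ₊^M, and all Δq ∈ ℝ^M with ‖Δq‖ ≤ C and q + Δq ∈ ℝ₊^M; and (ii) for every K > 0 there exists B > 0 such that Σ_{j=1}^M η_j(q)/ā_j ≥ K whenever ‖q‖ > B. Then the normalized ISPS weight map μ̄_i(q) = (η_i(q)/ā_i) / Σ_{j=1}^M (η_j(q)/ā_j) satisfies Condition 1: for every ε ∈ (0,1) and every C > 0 there exists B > 0 such that |μ̄_i(q+Δq) − μ̄_i(q)| ≤ ε for every index i, every q ∈ ℝ₊^M with ‖q‖ > B, and every Δq ∈ ℝ^M with ‖Δq‖ < C and q + Δq ∈ ℝ₊^M. -/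
open scoped BigOperators

/-!
Normalizing a nonnegative vector `y` instead of `x` moves each normalized coordinate by at most
`2 * ∑ j, |y j - x j| / ∑ j, x j`. A bounded change of the queue state keeps the numerator bounded,
while the denominator diverges with the queue length.
-/

section Normalization

variable {𝕜 : Type*} [Field 𝕜] [LinearOrder 𝕜] [IsStrictOrderedRing 𝕜]

lemma abs_div_sub_div_le {x y S T : 𝕜} (hS : 0 < S) (hy : 0 ≤ y) (hyT : y ≤ T) :
    |y / T - x / S| ≤ (|y - x| + |T - S|) / S := by
  -- When `T = 0`, the bounds on `y` force `y = 0`, so the convention `y / 0 = 0` does no harm.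
  have y_eq : y / T * T = y :=
    div_mul_cancel_of_imp fun hT => le_antisymm (hyT.trans hT.le) hy
  have decomposition : y / T - x / S = ((y - x) + y / T * (S - T)) / S := by
    rw [mul_sub, y_eq, eq_div_iff hS.ne', sub_mul, div_mul_cancel₀ x hS.ne']
    ring
  have abs_ratio_le_one : |y / T| ≤ 1 := by
    rw [abs_of_nonneg (div_nonneg hy (hy.trans hyT))]
    exact div_le_one_of_le₀ hyT (hy.trans hyT)
  rw [decomposition, abs_div, abs_of_pos hS]
  gcongr
  calc |y - x + y / T * (S - T)|
      ≤ |y - x| + |y / T| * |S - T| := by rw [← abs_mul]; exact abs_add_le _ _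
    _ ≤ |y - x| + |T - S| := by
        rw [abs_sub_comm S T]
        gcongr
        exact mul_le_of_le_one_left (abs_nonneg _) abs_ratio_le_one

lemma abs_div_sum_sub_div_sum_le_s9 {ι : Type*} [Fintype ι] {x y : ι → 𝕜} (hy : ∀ j, 0 ≤ y j)
    (hx : 0 < ∑ j, x j) (i : ι) :
    |y i / ∑ j, y j - x i / ∑ j, x j| ≤ 2 * (∑ j, |y j - x j|) / ∑ j, x j := by
  have coord_le : |y i - x i| ≤ ∑ j, |y j - x j| :=
    Finset.single_le_sum (f := fun j => |y j - x j|) (fun j _ => abs_nonneg _) (Finset.mem_univ i)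
  have total_le : |∑ j, y j - ∑ j, x j| ≤ ∑ j, |y j - x j| := by
    rw [← Finset.sum_sub_distrib]
    exact Finset.abs_sum_le_sum_abs _ _
  have le_total : y i ≤ ∑ j, y j :=
    Finset.single_le_sum (fun j _ => hy j) (Finset.mem_univ i)
  refine (abs_div_sub_div_le hx (hy i) le_total).trans ?_
  rw [two_mul]
  gcongr

end Normalization

theorem stmt_9_general {ι E : Type*} [Fintype ι] [SeminormedAddGroup E] (s : Set E)
    (a : ι → ℝ) (ha : ∀ j, 0 < a j) (η : ι → E → ℝ) (hη : ∀ j, ∀ q ∈ s, 0 ≤ η j q)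
    (hbd : ∀ C > (0 : ℝ), ∃ D > (0 : ℝ), ∀ j, ∀ q ∈ s, ∀ Δq : E, ‖Δq‖ ≤ C → q + Δq ∈ s →
      |η j (q + Δq) - η j q| ≤ D)
    (hdiv : ∀ K > (0 : ℝ), ∃ B > (0 : ℝ), ∀ q ∈ s, ‖q‖ > B → ∑ j, η j q / a j ≥ K) :
    ∀ ε > (0 : ℝ), ∀ C > (0 : ℝ), ∃ B > (0 : ℝ), ∀ i, ∀ q ∈ s, ‖q‖ > B →
      ∀ Δq : E, ‖Δq‖ < C → q + Δq ∈ s →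
        |(η i (q + Δq) / a i) / (∑ j, η j (q + Δq) / a j) -
          (η i q / a i) / (∑ j, η j q / a j)| ≤ ε := by
  intro ε hε C hC
  obtain ⟨D, -, hD⟩ := hbd C hC
  obtain ⟨B, hB, total_ge⟩ :=
    hdiv (max 1 (2 * (∑ j, D / a j) / ε)) (lt_max_of_lt_left one_pos)
  refine ⟨B, hB, fun i q hq hqB Δq hΔq hqΔq => ?_⟩
  obtain ⟨one_le_total, le_total⟩ := max_le_iff.mp (total_ge q hq hqB)
  have total_pos : 0 < ∑ j, η j q / a j := one_pos.trans_le one_le_total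
  have change_le (j : ι) : |η j (q + Δq) / a j - η j q / a j| ≤ D / a j := by
    rw [← sub_div, abs_div, abs_of_pos (ha j)]
    exact div_le_div_of_nonneg_right (hD j q hq Δq hΔq.le hqΔq) (ha j).le
  calc _ ≤ 2 * (∑ j, |η j (q + Δq) / a j - η j q / a j|) / ∑ j, η j q / a j :=
        abs_div_sum_sub_div_sum_le_s9 (fun j => div_nonneg (hη j _ hqΔq) (ha j).le) total_pos i
    _ ≤ 2 * (∑ j, D / a j) / ∑ j, η j q / a j := by gcongr with j; exact change_le j
    _ ≤ ε := (div_le_comm₀ hε total_pos).mp le_total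

/-- The normalized ISPS weight map `μ̄ i q = (η i q / a i) / ∑ j, η j q / a j` satisfies
Condition 1, assuming bounded queue changes change each `η j` boundedly and the total
weighted service time diverges with the total queue length. -/
theorem stmt_9 (M : ℕ) (hM : 1 ≤ M) (a : Fin M → ℝ) (ha : ∀ j, 0 < a j)
    (η : Fin M → EuclideanSpace ℝ (Fin M) → ℝ)
    (hηnonneg : ∀ j, ∀ q : EuclideanSpace ℝ (Fin M), (∀ k, 0 ≤ q k) → 0 ≤ η j q)
    (hbd : ∀ C > (0 : ℝ), ∃ D > (0 : ℝ), ∀ j, ∀ q : EuclideanSpace ℝ (Fin M),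
      (∀ k, 0 ≤ q k) → ∀ Δq : EuclideanSpace ℝ (Fin M), ‖Δq‖ ≤ C →
        (∀ k, 0 ≤ q k + Δq k) → |η j (q + Δq) - η j q| ≤ D)
    (hdiv : ∀ K > (0 : ℝ), ∃ B > (0 : ℝ), ∀ q : EuclideanSpace ℝ (Fin M),
      (∀ k, 0 ≤ q k) → ‖q‖ > B → (∑ j, η j q / a j) ≥ K) :
    ∀ ε ∈ Set.Ioo (0 : ℝ) 1, ∀ C > (0 : ℝ), ∃ B > (0 : ℝ),
      ∀ i : Fin M, ∀ q : EuclideanSpace ℝ (Fin M), (∀ k, 0 ≤ q k) → ‖q‖ > B →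
        ∀ Δq : EuclideanSpace ℝ (Fin M), ‖Δq‖ < C → (∀ k, 0 ≤ q k + Δq k) →
          |(η i (q + Δq) / a i) / (∑ j, η j (q + Δq) / a j) -
            (η i q / a i) / (∑ j, η j q / a j)| ≤ ε :=
  fun ε hε => stmt_9_general {q : EuclideanSpace ℝ (Fin M) | ∀ k, 0 ≤ q k} a ha η hηnonneg
    hbd hdiv ε hε.1
end

section
/- Let M ≥ 2, fix an index i, and let q, Δq ∈ ℝ^M and constants C₁, C₂ > 0 and 0 < C₃ ≤ C₄ satisfy: C₁ ≤ exp(q_i − q_j) ≤ C₂ for every j ≠ i; C₃ ≤ Δq_i ≤ C₄; and Δq_j ≤ 0 for every j ≠ i. Define the softmax weights σ_i(x) = e^{x_i} / Σ_{j=1}^M e^{x_j}. Then σ_i(q + Δq) − σ_i(q) ≥ (e^{C₃} − 1) / ( (e^{C₄} + (M−1)/C₁) · (C₂/(M−1) + 1) ), a strictly positive bound independent of q. -/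
/-!
Let `w` be the old weights, `w'` the new ones, `S = ∑_{j ≠ i} w j` and `S' = ∑_{j ≠ i} w' j`. Since
`S' ≤ S`, replacing `S'` by `S` only lowers the new normalized weight, and then the jump is exactly
`w' i / (w' i + S) - w i / (w i + S) = (w' i / w i - 1) / ((w' i / w i + S / w i) * (w i / S + 1))`.
Averaging the bounds on the ratios `w i / w j` over the indices `j ≠ i` bounds `S / w i` and
`w i / S`. The exponential case is `w j = exp (q j)`, `w' j = exp (q j + Δq j)`.
-/

open scoped BigOperators

section NormalizedWeights

variable {ι K : Type*} [Field K]

lemma div_add_sub_div_add {x y S : K} (hx : x ≠ 0) (hS : S ≠ 0) (hxS : x + S ≠ 0)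
    (hyS : y + S ≠ 0) :
    y / (y + S) - x / (x + S) = (y / x - 1) / ((y / x + S / x) * (x / S + 1)) := by
  field_simp
  ring

variable [LinearOrder K] [IsStrictOrderedRing K]

lemma sum_div_le_card_div {t : Finset ι} {w : ι → K} {a c : K} (ha : 0 < a) (hc : 0 < c)
    (hw : ∀ j ∈ t, 0 < w j) (h : ∀ j ∈ t, c ≤ a / w j) :
    (∑ j ∈ t, w j) / a ≤ t.card / c := by
  rw [Finset.sum_div, div_eq_mul_inv, ← nsmul_eq_mul]
  refine Finset.sum_le_card_nsmul _ _ _ fun j hj => ?_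
  rw [le_inv_comm₀ (div_pos (hw j hj) ha) hc, inv_div]
  exact h j hj

lemma div_sum_le_div_card {t : Finset ι} (ht : t.Nonempty) {w : ι → K} {a C : K}
    (hw : ∀ j ∈ t, 0 < w j) (h : ∀ j ∈ t, a / w j ≤ C) :
    a / ∑ j ∈ t, w j ≤ C / t.card := by
  have hcard : (0 : K) < t.card := Nat.cast_pos.mpr ht.card_pos
  rw [div_le_div_iff₀ (Finset.sum_pos hw ht) hcard, mul_comm a, Finset.mul_sum, ← nsmul_eq_mul]
  exact Finset.card_nsmul_le_sum _ _ _ fun j hj => (div_le_iff₀ (hw j hj)).mp (h j hj)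

lemma le_div_add_sub_div_add {x y S S' A B r R : K} (hx : 0 < x) (hS : 0 < S) (hS' : 0 ≤ S')
    (hS'S : S' ≤ S) (hA : S / x ≤ A) (hB : x / S ≤ B) (hr : 1 ≤ r) (hry : r ≤ y / x)
    (hyR : y / x ≤ R) :
    (r - 1) / ((R + A) * (B + 1)) ≤ y / (y + S') - x / (x + S) := by
  have hyx : 1 ≤ y / x := hr.trans hry
  have hy : 0 < y := hx.trans_le ((one_le_div hx).mp hyx)
  calc (r - 1) / ((R + A) * (B + 1))
      ≤ (y / x - 1) / ((y / x + S / x) * (x / S + 1)) := by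
        have : 0 ≤ y / x - 1 := sub_nonneg.mpr hyx
        have hden : 0 ≤ R + A :=
          (add_pos (div_pos hy hx) (div_pos hS hx)).le.trans (add_le_add hyR hA)
        gcongr
    _ = y / (y + S) - x / (x + S) :=
        (div_add_sub_div_add hx.ne' hS.ne' (add_pos hx hS).ne' (add_pos hy hS).ne').symm
    _ ≤ y / (y + S') - x / (x + S) := by gcongr

theorem stmt_11_general {s : Finset ι} (hs : 1 < s.card) {i : ι} (hi : i ∈ s) {w w' : ι → K}
    {C₁ C₂ r R : K} (hw : ∀ j ∈ s, 0 < w j) (hw' : ∀ j ∈ s, 0 ≤ w' j) (hC₁ : 0 < C₁) (hr : 1 ≤ r)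
    (hratio : ∀ j ∈ s, j ≠ i → C₁ ≤ w i / w j ∧ w i / w j ≤ C₂)
    (hincr : r ≤ w' i / w i ∧ w' i / w i ≤ R) (hdecr : ∀ j ∈ s, j ≠ i → w' j ≤ w j) :
    (r - 1) / ((R + ((s.card : K) - 1) / C₁) * (C₂ / ((s.card : K) - 1) + 1)) ≤
      w' i / ∑ j ∈ s, w' j - w i / ∑ j ∈ s, w j := by
  classical
  have others {p : ι → Prop} (h : ∀ j ∈ s, j ≠ i → p j) : ∀ j ∈ s.erase i, p j :=
    fun j hj => h j (Finset.mem_of_mem_erase hj) (Finset.ne_of_mem_erase hj)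
  have hne : (s.erase i).Nonempty := (Finset.one_lt_card_iff_nontrivial.mp hs).erase_nonempty
  have hpos : ∀ j ∈ s.erase i, 0 < w j := others fun j hj _ => hw j hj
  rw [← Finset.add_sum_erase s w hi, ← Finset.add_sum_erase s w' hi,
    ← Finset.cast_card_erase_of_mem hi]
  exact le_div_add_sub_div_add (hw i hi) (Finset.sum_pos hpos hne)
    (Finset.sum_nonneg (others fun j hj _ => hw' j hj)) (Finset.sum_le_sum (others hdecr))
    (sum_div_le_card_div (hw i hi) hC₁ hpos (others fun j hj hji => (hratio j hj hji).1))
    (div_sum_le_div_card hne hpos (others fun j hj hji => (hratio j hj hji).2))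
    hr hincr.1 hincr.2

end NormalizedWeights

/-- Softmax jump bound for exponential weight functions: under bounded ratios between the
exponential weights, a bounded increase of the `i`-th queue combined with non-increases of
the other queues forces the `i`-th softmax weight to jump by a fixed positive amount. -/
theorem stmt_11 (M : ℕ) (hM : 2 ≤ M) (i : Fin M) (q Δq : Fin M → ℝ)
    (C₁ C₂ C₃ C₄ : ℝ) (hC₁ : 0 < C₁) (hC₂ : 0 < C₂) (hC₃ : 0 < C₃) (hC₃₄ : C₃ ≤ C₄)
    (hratio : ∀ j, j ≠ i → C₁ ≤ Real.exp (q i - q j) ∧ Real.exp (q i - q j) ≤ C₂)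
    (hΔi : C₃ ≤ Δq i ∧ Δq i ≤ C₄)
    (hΔj : ∀ j, j ≠ i → Δq j ≤ 0) :
    Real.exp (q i + Δq i) / (∑ j, Real.exp (q j + Δq j)) -
        Real.exp (q i) / (∑ j, Real.exp (q j)) ≥
      (Real.exp C₃ - 1) /
        ((Real.exp C₄ + ((M : ℝ) - 1) / C₁) * (C₂ / ((M : ℝ) - 1) + 1)) := by
  simpa using stmt_11_general (s := Finset.univ) (hM.trans_eq (by simp)) (Finset.mem_univ i)
    (w := fun j => Real.exp (q j)) (w' := fun j => Real.exp (q j + Δq j))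
    (fun j _ => Real.exp_pos _) (fun j _ => Real.exp_nonneg _) hC₁ (Real.one_le_exp hC₃.le)
    (by simpa [← Real.exp_sub] using hratio) (by simpa [← Real.exp_sub] using hΔi)
    (by simpa using hΔj)
end

section
/- Let M ≥ 1, let μ* ∈ ℝ^M, r*, ρ ∈ ℝ^M, θ > 0, and γ ∈ (0,1] satisfy μ*ᵀr* − μ*ᵀρ < γ·θ/2. Let (r̃^n)_{n≥1} be a sequence in ℝ^M such that μ*ᵀ(r̃^{2n−1} + r̃^{2n}) ≤ 2·μ*ᵀr* for every n ≥ 1, and suppose liminf_{N→∞} (1/N)·#{ n ∈ {1,…,N} : μ*ᵀ(r̃^{2n−1} + r̃^{2n}) ≤ 2·μ*ᵀr* − θ } ≥ γ. Then μ*ᵀ Σ_{n=1}^{2N} (ρ − r̃^n) → +∞ as N → ∞. -/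
open scoped BigOperators

/-!
The loss `μ*ᵀ(2r* - r̃²ⁿ⁻¹ - r̃²ⁿ)` of the `n`-th pair of slots is nonnegative, and it is at least
`θ` on a set of pairs of lower density at least `γ`, so in the long run the losses average more than
the deficit `2μ*ᵀ(r* - ρ) < γθ`. The surplus of loss over deficit therefore grows at least linearly,
and its sum over the first `N` pairs is the weighted partial sum in question.
-/

open Filter Finset

theorem card_filter_nsmul_le_sum {ι G : Type*} [AddCommMonoid G] [PartialOrder G]
    [IsOrderedAddMonoid G] {s : Finset ι} {P : ι → Prop} [DecidablePred P] {d : ι → G} {θ : G}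
    (hd : ∀ i ∈ s, 0 ≤ d i) (hP : ∀ i ∈ s, P i → θ ≤ d i) :
    #{i ∈ s | P i} • θ ≤ ∑ i ∈ s, d i :=
  calc
    #{i ∈ s | P i} • θ ≤ ∑ i ∈ s with P i, d i :=
      card_nsmul_le_sum _ _ _ fun i hi => hP i (mem_filter.1 hi).1 (mem_filter.1 hi).2
    _ ≤ ∑ i ∈ s, d i := sum_le_sum_of_subset_of_nonneg (filter_subset _ _) fun i hi _ => hd i hi

theorem sum_Icc_one_two_mul {G : Type*} [AddCommMonoid G] (f : ℕ → G) (N : ℕ) :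
    ∑ n ∈ Icc 1 (2 * N), f n = ∑ n ∈ Icc 1 N, (f (2 * n - 1) + f (2 * n)) := by
  induction N with
  | zero => simp
  | succ N ih =>
    rw [Nat.mul_succ, sum_Icc_succ_top (by lia), sum_Icc_succ_top (by lia), ih,
      sum_Icc_succ_top (by lia), add_assoc]
    rfl

theorem eventually_mul_lt_of_lt_liminf_div {u : ℕ → ℝ} (hu : ∀ N, 0 ≤ u N) {x : ℝ}
    (hx : x < liminf (fun N : ℕ => u N / N) atTop) : ∀ᶠ N : ℕ in atTop, x * N < u N := by
  -- Without a lower bound on `u N / N`, the real-valued `liminf` could be a junk value.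
  have hbdd : IsBoundedUnder (· ≥ ·) atTop fun N : ℕ => u N / N :=
    isBoundedUnder_of ⟨0, fun N => div_nonneg (hu N) N.cast_nonneg⟩
  filter_upwards [eventually_lt_of_lt_liminf hx hbdd, eventually_gt_atTop 0] with N hN hN₀
  exact (lt_div_iff₀ (Nat.cast_pos.2 hN₀)).1 hN

theorem tendsto_sum_Icc_sub_atTop_of_le_liminf_card_div {d : ℕ → ℝ} {P : ℕ → Prop}
    [DecidablePred P] {θ γ c : ℝ} (hθ : 0 < θ) (hd : ∀ n, 1 ≤ n → 0 ≤ d n)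
    (hP : ∀ n, 1 ≤ n → P n → θ ≤ d n)
    (hγ : γ ≤ liminf (fun N : ℕ => (#{n ∈ Icc 1 N | P n} : ℝ) / N) atTop) (hc : c < γ * θ) :
    Tendsto (fun N : ℕ => ∑ n ∈ Icc 1 N, (d n - c)) atTop atTop := by
  obtain ⟨x, hcx, hxγ⟩ : ∃ x, c / θ < x ∧ x < γ := exists_between ((div_lt_iff₀ hθ).2 hc)
  have slope_pos : 0 < x * θ - c := sub_pos.2 ((div_lt_iff₀ hθ).1 hcx)
  refine tendsto_atTop_mono' _ ?_ (tendsto_natCast_atTop_atTop.atTop_mul_const slope_pos)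
  filter_upwards [eventually_mul_lt_of_lt_liminf_div (fun _ => Nat.cast_nonneg _)
    (hxγ.trans_le hγ)] with N hN
  calc
    (N : ℝ) * (x * θ - c) = x * N * θ - N * c := by ring
    _ ≤ #{n ∈ Icc 1 N | P n} * θ - N * c := by gcongr
    _ ≤ ∑ n ∈ Icc 1 N, d n - N * c := by
      rw [← nsmul_eq_mul]
      gcongr
      exact card_filter_nsmul_le_sum (fun n hn => hd n (mem_Icc.1 hn).1)
        fun n hn => hP n (mem_Icc.1 hn).1
    _ = ∑ n ∈ Icc 1 N, (d n - c) := by simp [sum_sub_distrib]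

theorem stmt_17_general {E : Type*} [AddCommGroup E] (φ : E →+ ℝ) (rStar ρ : E) (θ γ : ℝ)
    (hθ : 0 < θ) (hρ : φ rStar - φ ρ < γ * θ / 2) (r : ℕ → E)
    (hr : ∀ n : ℕ, 1 ≤ n → φ (r (2 * n - 1) + r (2 * n)) ≤ 2 * φ rStar)
    (hfrac : γ ≤ liminf (fun N : ℕ =>
      (#{n ∈ Icc 1 N | φ (r (2 * n - 1) + r (2 * n)) ≤ 2 * φ rStar - θ} : ℝ) / N) atTop) :
    Tendsto (fun N : ℕ => φ (∑ n ∈ Icc 1 (2 * N), (ρ - r n))) atTop atTop := by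
  have surplus_eq (N : ℕ) : φ (∑ n ∈ Icc 1 (2 * N), (ρ - r n)) =
      ∑ n ∈ Icc 1 N, (2 * φ rStar - φ (r (2 * n - 1) + r (2 * n)) - 2 * (φ rStar - φ ρ)) := by
    rw [sum_Icc_one_two_mul, map_sum]
    refine sum_congr rfl fun n _ => ?_
    simp only [map_add, map_sub]
    ring
  simp only [surplus_eq]
  exact tendsto_sum_Icc_sub_atTop_of_le_liminf_card_div hθ (fun n hn => sub_nonneg.2 (hr n hn))
    (fun _ _ => le_sub_comm.1) hfrac (by linarith)

/-- Core of the first necessity case: if the expected rate allocations over pairs of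
consecutive slots lose at least `θ` of the maximal weighted sum rate `μ*ᵀr*` on a long-run
fraction at least `γ` of pairs, and `μ*ᵀr* - μ*ᵀρ < γθ/2`, then the weighted partial sums
`μ*ᵀ ∑ (ρ - r̃ⁿ)` diverge to `+∞`. -/
theorem stmt_17 (M : ℕ) (hM : 1 ≤ M) (μStar rStar ρ : Fin M → ℝ) (θ γ : ℝ)
    (hθ : 0 < θ) (hγ : γ ∈ Set.Ioc (0 : ℝ) 1)
    (hρ : (∑ i, μStar i * rStar i) - (∑ i, μStar i * ρ i) < γ * θ / 2)
    (r : ℕ → Fin M → ℝ)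
    (hr : ∀ n : ℕ, 1 ≤ n →
      (∑ i, μStar i * (r (2 * n - 1) i + r (2 * n) i)) ≤ 2 * ∑ i, μStar i * rStar i)
    (hfrac : γ ≤ Filter.liminf (fun N : ℕ =>
      ((((Finset.Icc 1 N).filter (fun n =>
        (∑ i, μStar i * (r (2 * n - 1) i + r (2 * n) i)) ≤
          2 * (∑ i, μStar i * rStar i) - θ)).card : ℝ) / (N : ℝ))) Filter.atTop) :
    Filter.Tendsto
      (fun N : ℕ => ∑ i, μStar i * ∑ n ∈ Finset.Icc 1 (2 * N), (ρ i - r n i))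
      Filter.atTop Filter.atTop := by
  simpa [dotProduct] using
    stmt_17_general (dotProductBilin ℝ ℝ μStar).toAddMonoidHom rStar ρ θ γ hθ hρ r hr hfrac
end
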